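/- arXiv:2102.09406 — 2 statements merged into one kernel-verified Lean document; each statement's English description precedes it below -/
import Mathlib

section
/- Under the multi-cluster game setup and the algorithm below, there exists a unique Nash equilibrium x* ∈ ℝ^q of the game (i.e., a unique point with F^h((x*)^h, (x*)^{-h}) ≤ F^h(x^h, (x*)^{-h}) for every x^h ∈ ℝ^{q_h} and every cluster h, where F^h = Σ_{i=1}^{n_h} f_i^h), this x* satisfies g^h(x*) = 0 for all h, and there exist a step-size α > 0, a constant c > 0 and a rate ρ ∈ (0,1) such that for all agents i, j and all k: ‖x_i(k) − x*‖ ≤ c ρ^k; in particular all local estimates x_i(k) converge to the common limit x* at a linear (geometric) rate. -/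
noncomputable section

/-- Indexing of agents / coordinates grouped into clusters: `ℝ^q = ℝ^{q_1} × ⋯ × ℝ^{q_H}`
is modelled as functions on `(h : Fin H) × Fin (qh h)`, and similarly the `n = ∑ n_h`
agents are indexed by `(h : Fin H) × Fin (nh h)` (ordered by cluster). -/
abbrev Clustered (H : ℕ) (d : Fin H → ℕ) := (h : Fin H) × Fin (d h)

/-- Replace the cluster-`h` block of `x` by `z`, i.e. form `(z, x^{-h})`. -/
def blockPatch {H : ℕ} {qh : Fin H → ℕ} (x : Clustered H qh → ℝ)
    (h : Fin H) (z : Fin (qh h) → ℝ) : Clustered H qh → ℝ :=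
  fun j => if hj : j.1 = h then z (hj ▸ j.2) else x j

/-- `g` is the partial gradient of `f` with respect to the cluster-`h` block at
the point `x`: the map `z ↦ f (z, x^{-h})` has derivative `w ↦ ∑ⱼ g j * w j` at `x^h`. -/
def HasBlockGradient {H : ℕ} {qh : Fin H → ℕ}
    (f : (Clustered H qh → ℝ) → ℝ) (h : Fin H)
    (g : Fin (qh h) → ℝ) (x : Clustered H qh → ℝ) : Prop :=
  HasFDerivAt (fun z : Fin (qh h) → ℝ => f (blockPatch x h z))
    (∑ j, g j • (ContinuousLinearMap.proj j : (Fin (qh h) → ℝ) →L[ℝ] ℝ))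
    (fun j => x ⟨h, j⟩)

/-- Frobenius norm of a real matrix. -/
def frobNorm {m q : Type*} [Fintype m] [Fintype q] (A : Matrix m q ℝ) : ℝ :=
  Real.sqrt (∑ i, ∑ j, (A i j) ^ 2)

/-- Weighted Frobenius norm `‖A‖_F^u = ‖diag(√u) A‖_F`. -/
def frobNormW {n q : Type*} [Fintype n] [Fintype q] [DecidableEq n]
    (w : n → ℝ) (A : Matrix n q ℝ) : ℝ :=
  frobNorm (Matrix.diagonal (fun i => Real.sqrt (w i)) * A)

/-- Weighted Frobenius norm `‖B‖_F^{v} = ‖diag(√v)⁻¹ B‖_F`. -/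
def frobNormWinv {n q : Type*} [Fintype n] [Fintype q] [DecidableEq n]
    (w : n → ℝ) (A : Matrix n q ℝ) : ℝ :=
  frobNorm (Matrix.diagonal (fun i => (Real.sqrt (w i))⁻¹) * A)

/-- Spectral norm of a square real matrix: operator norm on Euclidean space. -/
def specNorm {n : Type*} [Fintype n] [DecidableEq n] (A : Matrix n n ℝ) : ℝ :=
  ‖LinearMap.toContinuousLinearMap (Matrix.toEuclideanLin A)‖

/-- The matrix all of whose rows equal `w` (e.g. `1 uᵀ` or `1 x̄`). -/
def rowRep (N : Type*) {Q : Type*} (w : Q → ℝ) : Matrix N Q ℝ :=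
  Matrix.of fun _ j => w j

/-- The block-diagonal `n × q` matrix `blockdiag{y^1, …, y^H}` built from
per-cluster matrices `y^h ∈ ℝ^{n_h × q_h}`. -/
def blockDiag {H : ℕ} {nh qh : Fin H → ℕ}
    (y : (h : Fin H) → Matrix (Fin (nh h)) (Fin (qh h)) ℝ) :
    Matrix (Clustered H nh) (Clustered H qh) ℝ :=
  Matrix.of fun i j => if hij : i.1 = j.1 then y i.1 i.2 (hij.symm ▸ j.2) else 0

/-- The matrix `G^h` of cluster-`h` partial gradients, evaluated at the rows of
the estimation matrix `x` belonging to cluster `h`. -/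
def gradMat {H : ℕ} {nh qh : Fin H → ℕ}
    (gradf : (h : Fin H) → (i : Fin (nh h)) → (Clustered H qh → ℝ) → Fin (qh h) → ℝ)
    (h : Fin H) (x : Matrix (Clustered H nh) (Clustered H qh) ℝ) :
    Matrix (Fin (nh h)) (Fin (qh h)) ℝ :=
  Matrix.of fun i jj => gradf h i (x ⟨h, i⟩) jj

/-!
Nash equilibria are the zeros of the game mapping `M`, and a Lipschitz strongly monotone map has
exactly one zero `x*`. Conjugating `R` and the `C^h` by the square roots of their Perron vectors
makes them fix one and the same positive unit vector from both sides; such a matrix is a strict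
Euclidean contraction off the agreement states. Column stochasticity makes `y^h` sum to the cluster
gradient, so the averaged decisions follow `w ↦ w - α D M(w)`, where `D > 0` scales the block of
cluster `h` by a constant `d_h`. In the coordinates `√d_h` this field is again strongly monotone,
and the step contracts by a factor `1 - α κ`. The consensus, tracking and optimality errors are
coupled with gains of order `α`, except for one of order `1` from consensus to tracking, and a
weighted sum of the three decays geometrically for every small `α`.
-/

section

open Filter Matrix Topology
open scoped RealInnerProductSpace

section Irreducible

variable {N M : Type*}

theorem rel_of_forall_pos_entry {A : Matrix N N ℝ} (hA : A.IsIrreducible) {r : N → N → Prop}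
    (hrefl : ∀ i, r i i) (htrans : ∀ i j k, r i j → r j k → r i k)
    (hr : ∀ i j, 0 < A i j → r i j) (i j : N) : r i j := by
  let := A.toQuiver
  obtain ⟨p, -⟩ := hA.connected i j
  induction p with
  | nil => exact hrefl i
  | cons _ e ih => exact htrans _ _ _ ih (hr _ _ e.down)

theorem isIrreducible_of_forall_pos_entry {A B : Matrix N N ℝ} (hA : A.IsIrreducible)
    (hB : ∀ i j, 0 ≤ B i j) (hAB : ∀ i j, 0 < A i j → 0 < B i j) : B.IsIrreducible where
  nonneg := hB
  connected i j := by
    have hpath (p : @Quiver.Path N A.toQuiver i j) : ∃ q : @Quiver.Path N B.toQuiver i j,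
        @Quiver.Path.length N B.toQuiver i j q = @Quiver.Path.length N A.toQuiver i j p := by
      induction p with
      | nil => exact ⟨@Quiver.Path.nil N B.toQuiver i, rfl⟩
      | cons _ e ih =>
        obtain ⟨q, hq⟩ := ih
        exact ⟨@Quiver.Path.cons N B.toQuiver _ _ _ q ⟨hAB _ _ e.down⟩, congrArg (· + 1) hq⟩
    obtain ⟨p, hp⟩ := hA.connected i j
    obtain ⟨q, hq⟩ := hpath p
    exact ⟨q, hq.symm ▸ hp⟩

variable [Fintype N]

theorem pos_of_stationary {A : Matrix N N ℝ} (hA : A.IsIrreducible) {w : N → ℝ}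
    (hw : ∀ i, 0 ≤ w i) (hw0 : w ≠ 0) (hwA : w ᵥ* A = w) (i : N) : 0 < w i := by
  obtain ⟨j, hj⟩ := Function.ne_iff.1 hw0
  refine rel_of_forall_pos_entry hA (r := fun i j => 0 < w i → 0 < w j) (fun _ => id)
    (fun _ _ _ h₁ h₂ => h₂ ∘ h₁) (fun i j hij hi => ?_) j i ((hw j).lt_of_ne' hj)
  rw [← hwA]
  exact (mul_pos hi hij).trans_le <| Finset.single_le_sum (f := fun k => w k * A k j)
    (fun k _ => mul_nonneg (hw k) (hA.nonneg k j)) (Finset.mem_univ i)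

/-- A unit Perron vector `s` of the nonnegative irreducible matrix `A`, on the left and on the
right at once. Conjugating a stochastic matrix by the square roots of its Perron vector puts it in
this form, in which it contracts the orthogonal complement of `s` for the usual `ℓ²` norm. -/
structure IsBalanced (A : Matrix N N ℝ) (s : N → ℝ) : Prop where
  irreducible : A.IsIrreducible
  diag_pos : ∀ i, 0 < A i i
  pos : ∀ i, 0 < s i
  sum_sq : ∑ i, s i ^ 2 = 1
  mulVec_eq : A *ᵥ s = s
  vecMul_eq : s ᵥ* A = s

theorem IsBalanced.transpose {A : Matrix N N ℝ} {s : N → ℝ} (h : IsBalanced A s) :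
    IsBalanced Aᵀ s where
  irreducible := h.irreducible.transpose
  diag_pos := h.diag_pos
  pos := h.pos
  sum_sq := h.sum_sq
  mulVec_eq := by rw [mulVec_transpose, h.vecMul_eq]
  vecMul_eq := by rw [vecMul_transpose, h.mulVec_eq]

variable [DecidableEq N]

theorem abs_stationary_of_stationary {R : Matrix N N ℝ} (hR : R ∈ rowStochastic ℝ N) {w : N → ℝ}
    (hw : w ᵥ* R = w) : |w| ᵥ* R = |w| := by
  have habs_le (j : N) : |w| j ≤ (|w| ᵥ* R) j := by
    calc |w j| = |∑ i, w i * R i j| := congrArg (|· j|) hw.symm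
      _ ≤ ∑ i, |w i * R i j| := Finset.abs_sum_le_sum_abs ..
      _ = ∑ i, |w i| * R i j := Finset.sum_congr rfl fun i _ => by
        rw [abs_mul, abs_of_nonneg (nonneg_of_mem_rowStochastic hR)]
  have hsum : ∑ j, |w| j = ∑ j, (|w| ᵥ* R) j := by
    rw [← dotProduct_one, ← dotProduct_one, ← dotProduct_mulVec,
      one_vecMul_of_mem_rowStochastic hR]
  have heq := (Finset.sum_eq_sum_iff_of_le fun j _ => habs_le j).1 hsum
  exact funext fun j => (heq j (Finset.mem_univ j)).symm

theorem exists_pos_stationary [Nonempty N] {R : Matrix N N ℝ} (hR : R ∈ rowStochastic ℝ N)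
    (hirr : R.IsIrreducible) :
    ∃ u : N → ℝ, (∀ i, 0 < u i) ∧ ∑ i, u i = 1 ∧ u ᵥ* R = u := by
  have hdet : (R - 1).det = 0 := exists_mulVec_eq_zero_iff.1
    ⟨1, one_ne_zero, by rw [sub_mulVec, one_mulVec, one_vecMul_of_mem_rowStochastic hR, sub_self]⟩
  obtain ⟨w, hw_ne, hw⟩ := exists_vecMul_eq_zero_iff.2 hdet
  rw [vecMul_sub, vecMul_one, sub_eq_zero] at hw
  have habs := abs_stationary_of_stationary hR hw
  have hpos := pos_of_stationary hirr (fun i => abs_nonneg (w i))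
    (fun h => hw_ne (funext fun i => abs_eq_zero.1 (congrFun h i))) habs
  have hsum : 0 < ∑ i, |w| i := Finset.sum_pos (fun i _ => hpos i) Finset.univ_nonempty
  refine ⟨(∑ i, |w| i)⁻¹ • |w|, fun i => mul_pos (inv_pos.2 hsum) (hpos i), ?_, ?_⟩
  · simp only [Pi.smul_apply, smul_eq_mul, ← Finset.mul_sum]
    exact inv_mul_cancel₀ hsum.ne'
  · rw [smul_vecMul, habs]

theorem exists_isBalanced_of_mem_rowStochastic [Nonempty N] {R : Matrix N N ℝ}
    (hR : R ∈ rowStochastic ℝ N) (hirr : R.IsIrreducible) (hdiag : ∀ i, 0 < R i i) :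
    ∃ s : N → ℝ, IsBalanced (diagonal s * R * diagonal s⁻¹) s := by
  obtain ⟨u, hu, hsum, huR⟩ := exists_pos_stationary hR hirr
  have hs (i : N) : 0 < √(u i) := Real.sqrt_pos.2 (hu i)
  have hsq (i : N) : √(u i) * √(u i) = u i := Real.mul_self_sqrt (hu i).le
  have hentry (i j : N) : (diagonal (fun i => √(u i)) * R * diagonal (fun i => √(u i))⁻¹) i j =
      √(u i) * R i j * (√(u j))⁻¹ := by
    rw [mul_diagonal, diagonal_mul, Pi.inv_apply]
  have hentry_pos (i j : N) (h : 0 < R i j) : 0 < √(u i) * R i j * (√(u j))⁻¹ :=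
    mul_pos (mul_pos (hs i) h) (inv_pos.2 (hs j))
  refine ⟨fun i => √(u i), isIrreducible_of_forall_pos_entry hirr (fun i j => ?_) (fun i j => ?_),
    fun i => ?_, hs, by simpa only [Real.sq_sqrt (hu _).le], funext fun i => ?_,
    funext fun j => ?_⟩
  · rw [hentry]
    exact mul_nonneg (mul_nonneg (hs i).le (hirr.nonneg i j)) (inv_nonneg.2 (hs j).le)
  · rw [hentry]
    exact hentry_pos i j
  · rw [hentry]
    exact hentry_pos i i (hdiag i)
  · simp only [mulVec, dotProduct, hentry, inv_mul_cancel_right₀ (hs _).ne', ← Finset.mul_sum,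
      sum_row_of_mem_rowStochastic hR, mul_one]
  · simp only [vecMul, dotProduct, hentry, ← mul_assoc, hsq, ← Finset.sum_mul]
    rw [show ∑ i, u i * R i j = u j from congrFun huR j, mul_inv_eq_iff_eq_mul₀ (hs j).ne', hsq]

theorem exists_isBalanced_of_mem_colStochastic [Nonempty N] {C : Matrix N N ℝ}
    (hC : C ∈ colStochastic ℝ N) (hirr : C.IsIrreducible) (hdiag : ∀ i, 0 < C i i) :
    ∃ s : N → ℝ, IsBalanced (diagonal s⁻¹ * C * diagonal s) s := by
  obtain ⟨s, hs⟩ := exists_isBalanced_of_mem_rowStochastic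
    (transpose_mem_rowStochastic_iff_mem_colStochastic.2 hC) hirr.transpose hdiag
  refine ⟨s, ?_⟩
  simpa only [transpose_mul, diagonal_transpose, transpose_transpose, Matrix.mul_assoc]
    using hs.transpose

end Irreducible

theorem norm_lt_one_of_forall_norm_lt {V W : Type*} [NormedAddCommGroup V] [NormedSpace ℝ V]
    [FiniteDimensional ℝ V] [NormedAddCommGroup W] [NormedSpace ℝ W] {T : V →L[ℝ] W}
    (hT : ∀ x, x ≠ 0 → ‖T x‖ < ‖x‖) : ‖T‖ < 1 := by
  have := FiniteDimensional.proper_real V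
  rcases (Metric.sphere (0 : V) 1).eq_empty_or_nonempty with hempty | hne
  · refine (T.opNorm_le_of_unit_norm le_rfl fun x hx => ?_).trans_lt one_pos
    exact absurd (mem_sphere_zero_iff_norm.2 hx) (hempty ▸ Set.notMem_empty x)
  · obtain ⟨x, hx, hmax⟩ := (isCompact_sphere (0 : V) 1).exists_isMaxOn hne
      T.continuous.norm.continuousOn
    rw [mem_sphere_zero_iff_norm] at hx
    have hle : ‖T‖ ≤ ‖T x‖ := T.opNorm_le_of_unit_norm (norm_nonneg _) fun z hz =>
      hmax (mem_sphere_zero_iff_norm.2 hz)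
    refine hle.trans_lt (hx ▸ hT x ?_)
    exact norm_pos_iff.1 (hx ▸ one_pos)

section Mixing

variable {N E : Type*} [NormedAddCommGroup E] [InnerProductSpace ℝ E]

/-- The family in which agent `i` holds `s i • e`. -/
def spread (s : N → ℝ) : E →L[ℝ] PiLp 2 (fun _ : N => E) :=
  (PiLp.continuousLinearEquiv 2 ℝ fun _ : N => E).symm.toContinuousLinearMap.comp <|
    .pi fun i => s i • .id ℝ E

theorem spread_apply (s : N → ℝ) (e : E) (i : N) : spread s e i = s i • e := rfl

variable [Fintype N]

/-- The action `A ⊗ id` of a matrix on vectors indexed by the agents. -/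
def mixing (A : Matrix N N ℝ) : PiLp 2 (fun _ : N => E) →L[ℝ] PiLp 2 (fun _ : N => E) :=
  (PiLp.continuousLinearEquiv 2 ℝ fun _ : N => E).symm.toContinuousLinearMap.comp <|
    .pi fun i => ∑ j, A i j • PiLp.proj 2 (fun _ : N => E) j

/-- The weighted sum `∑ i, s i • x i` over the agents, adjoint to `spread s`. -/
def gather (s : N → ℝ) : PiLp 2 (fun _ : N => E) →L[ℝ] E :=
  ∑ i, s i • PiLp.proj 2 (fun _ : N => E) i

variable (A : Matrix N N ℝ) (s : N → ℝ)

theorem mixing_apply (x : PiLp 2 fun _ : N => E) (i : N) :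
    mixing A x i = ∑ j, A i j • x j := by
  simp [mixing]

theorem gather_apply (x : PiLp 2 fun _ : N => E) : gather s x = ∑ i, s i • x i := by
  simp [gather]

theorem gather_spread (e : E) : gather s (spread s e) = (∑ i, s i ^ 2) • e := by
  simp only [gather_apply, spread_apply, smul_smul, ← pow_two, Finset.sum_smul]

theorem gather_mixing (x : PiLp 2 fun _ : N => E) : gather s (mixing A x) = gather (s ᵥ* A) x := by
  simp only [gather_apply, mixing_apply, Finset.smul_sum, smul_smul]
  rw [Finset.sum_comm]
  simp only [vecMul, dotProduct, Finset.sum_smul]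

theorem mixing_spread (e : E) : mixing A (spread s e) = spread (A *ᵥ s) e := by
  ext1 i
  simp only [mixing_apply, spread_apply, mulVec, dotProduct, smul_smul, Finset.sum_smul]

variable {A s}

theorem sum_dispersion_of_isBalanced (h : IsBalanced A s) (x : PiLp 2 fun _ : N => E) :
    ∑ i, ∑ j, s i * A i j * s j * ‖(s j)⁻¹ • x j - (s i)⁻¹ • mixing A x i‖ ^ 2 =
      ‖x‖ ^ 2 - ‖mixing A x‖ ^ 2 := by
  have hrow (i : N) : ∑ j, A i j * s j = s i := congrFun h.mulVec_eq i
  have hcol (j : N) : ∑ i, s i * A i j = s j := congrFun h.vecMul_eq j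
  have hs (i : N) : s i ≠ 0 := (h.pos i).ne'
  have hterm (i j : N) : s i * A i j * s j * ‖(s j)⁻¹ • x j - (s i)⁻¹ • mixing A x i‖ ^ 2 =
      s i * A i j * ((s j)⁻¹ * ‖x j‖ ^ 2) - 2 * ⟪A i j • x j, mixing A x i⟫ +
        A i j * s j * ((s i)⁻¹ * ‖mixing A x i‖ ^ 2) := by
    rw [norm_sub_sq_real]
    simp only [norm_smul, norm_inv, Real.norm_of_nonneg (h.pos _).le, real_inner_smul_left,
      real_inner_smul_right]
    have := hs i
    have := hs j
    field_simp
  have hfst : ∑ i, ∑ j, s i * A i j * ((s j)⁻¹ * ‖x j‖ ^ 2) = ‖x‖ ^ 2 := by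
    rw [Finset.sum_comm]
    simp only [← Finset.sum_mul, hcol, mul_inv_cancel_left₀ (hs _), PiLp.norm_sq_eq_of_L2]
  have hsnd : ∑ i, ∑ j, 2 * ⟪A i j • x j, mixing A x i⟫ = 2 * ‖mixing A x‖ ^ 2 := by
    simp only [← Finset.mul_sum, ← sum_inner, ← mixing_apply, real_inner_self_eq_norm_sq,
      PiLp.norm_sq_eq_of_L2]
  have htrd : ∑ i, ∑ j, A i j * s j * ((s i)⁻¹ * ‖mixing A x i‖ ^ 2) = ‖mixing A x‖ ^ 2 := by
    simp only [← Finset.sum_mul, hrow, mul_inv_cancel_left₀ (hs _), PiLp.norm_sq_eq_of_L2]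
  simp only [hterm, Finset.sum_add_distrib, Finset.sum_sub_distrib, hfst, hsnd, htrd]
  ring

theorem norm_mixing_lt_of_isBalanced (h : IsBalanced A s) {x : PiLp 2 fun _ : N => E}
    (hx : gather s x = 0) (hx0 : x ≠ 0) : ‖mixing A x‖ < ‖x‖ := by
  by_contra! hle
  have hterm_nonneg (i j : N) :
      0 ≤ s i * A i j * s j * ‖(s j)⁻¹ • x j - (s i)⁻¹ • mixing A x i‖ ^ 2 :=
    mul_nonneg (mul_nonneg (mul_nonneg (h.pos i).le (h.irreducible.nonneg i j)) (h.pos j).le)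
      (sq_nonneg _)
  have hle_zero : ∑ i, ∑ j, s i * A i j * s j *
      ‖(s j)⁻¹ • x j - (s i)⁻¹ • mixing A x i‖ ^ 2 ≤ 0 := by
    rw [sum_dispersion_of_isBalanced h]
    exact sub_nonpos.2 (pow_le_pow_left₀ (norm_nonneg _) hle 2)
  have hneighbour (i j : N) (hij : 0 < A i j) : (s j)⁻¹ • x j = (s i)⁻¹ • mixing A x i := by
    have hzero := (Finset.single_le_sum (fun j _ => hterm_nonneg i j) (Finset.mem_univ j)).trans <|
      (Finset.single_le_sum (fun i _ => Finset.sum_nonneg fun j _ => hterm_nonneg i j)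
        (Finset.mem_univ i)).trans hle_zero
    have hpos : 0 < s i * A i j * s j := mul_pos (mul_pos (h.pos i) hij) (h.pos j)
    have := nonpos_of_mul_nonpos_right hzero hpos
    exact sub_eq_zero.1 (norm_eq_zero.1 (pow_eq_zero_iff two_ne_zero |>.1
      (this.antisymm (sq_nonneg _))))
  have hconst := rel_of_forall_pos_entry h.irreducible
    (r := fun i j => (s i)⁻¹ • x i = (s j)⁻¹ • x j) (fun _ => rfl) (fun _ _ _ => Eq.trans)
    fun i j hij => (hneighbour i i (h.diag_pos i)).trans (hneighbour i j hij).symm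
  refine hx0 (PiLp.ext fun i => ?_)
  have hspread : x = spread s ((s i)⁻¹ • x i) := by
    ext1 j
    rw [spread_apply, hconst i j, smul_inv_smul₀ (h.pos j).ne']
  rw [hspread, gather_spread, h.sum_sq, one_smul] at hx
  rw [hspread, hx, map_zero]

theorem exists_norm_mixing_le_of_isBalanced [FiniteDimensional ℝ E] (h : IsBalanced A s) :
    ∃ σ ∈ Set.Ico (0 : ℝ) 1, ∀ x : PiLp 2 (fun _ : N => E), gather s x = 0 →
      ‖mixing A x‖ ≤ σ * ‖x‖ := by
  let T := (mixing A).comp (LinearMap.ker (gather (E := E) s).toLinearMap).subtypeL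
  have hT : ‖T‖ < 1 := norm_lt_one_of_forall_norm_lt fun x hx =>
    norm_mixing_lt_of_isBalanced h x.2 (by simpa using hx)
  exact ⟨‖T‖, ⟨T.opNorm_nonneg, hT⟩, fun x hx => T.le_opNorm ⟨x, hx⟩⟩

end Mixing

theorem eventually_mul_lt (q : ℝ) {d : ℝ} (hd : 0 < d) : ∀ᶠ α in 𝓝[>] (0 : ℝ), α * q < d :=
  nhdsWithin_le_nhds <|
    ((continuous_mul_const q).tendsto' 0 0 (zero_mul q)).eventually_lt_const hd

section StronglyMonotone

variable {V : Type*} [NormedAddCommGroup V] [InnerProductSpace ℝ V]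

/-- Strong monotonicity with modulus `μ` of a vector field on an inner product space. -/
def StronglyMonotone (μ : ℝ) (F : V → V) : Prop :=
  ∀ x y, μ * ‖x - y‖ ^ 2 ≤ ⟪F x - F y, x - y⟫

theorem norm_sub_smul_le {μ K α : ℝ} (hα : 0 ≤ α) (hαμ : α * μ ≤ 1) (hαK : α * K ^ 2 ≤ μ)
    {e d : V} (hinner : μ * ‖e‖ ^ 2 ≤ ⟪d, e⟫) (hnorm : ‖d‖ ≤ K * ‖e‖) :
    ‖e - α • d‖ ≤ (1 - α * (μ / 2)) * ‖e‖ := by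
  refine abs_le_of_sq_le_sq' ?_ (mul_nonneg (by linarith) (norm_nonneg e)) |>.2
  calc ‖e - α • d‖ ^ 2 = ‖e‖ ^ 2 - 2 * α * ⟪d, e⟫ + α ^ 2 * ‖d‖ ^ 2 := by
        rw [norm_sub_sq_real, real_inner_smul_right, real_inner_comm, norm_smul, mul_pow,
          Real.norm_eq_abs, sq_abs]
        ring
    _ ≤ ‖e‖ ^ 2 - 2 * α * (μ * ‖e‖ ^ 2) + α ^ 2 * (K * ‖e‖) ^ 2 := by gcongr
    _ = (1 - α * μ - α * (μ - α * K ^ 2)) * ‖e‖ ^ 2 := by ring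
    _ ≤ (1 - α * (μ / 2)) ^ 2 * ‖e‖ ^ 2 := by
        have := mul_nonneg hα (sub_nonneg.2 hαK)
        gcongr
        nlinarith [sq_nonneg (α * μ)]
    _ = ((1 - α * (μ / 2)) * ‖e‖) ^ 2 := by ring

theorem StronglyMonotone.eventually_norm_sub_smul_le {μ : ℝ} (hμ : 0 < μ) {F : V → V} {K : NNReal}
    (hF : StronglyMonotone μ F) (hK : LipschitzWith K F) :
    ∀ᶠ α in 𝓝[>] 0, ∀ x y,
      ‖(x - y) - α • (F x - F y)‖ ≤ (1 - α * (μ / 2)) * ‖x - y‖ := by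
  filter_upwards [self_mem_nhdsWithin, eventually_mul_lt μ one_pos,
    eventually_mul_lt (K ^ 2) hμ] with α hα hαμ hαK x y
  exact norm_sub_smul_le (le_of_lt hα) hαμ.le hαK.le (hF x y) (hK.norm_sub_le x y)

theorem StronglyMonotone.injective {μ : ℝ} (hμ : 0 < μ) {F : V → V} (hF : StronglyMonotone μ F) :
    Function.Injective F := fun x y hxy => by
  have h := hF x y
  rw [hxy, sub_self, inner_zero_left] at h
  have := nonpos_of_mul_nonpos_right h hμ
  exact sub_eq_zero.1 <| norm_eq_zero.1 <|
    pow_eq_zero_iff two_ne_zero |>.1 <| this.antisymm (sq_nonneg _)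

theorem StronglyMonotone.exists_eq_zero [CompleteSpace V] {μ : ℝ} (hμ : 0 < μ) {F : V → V}
    {K : NNReal} (hF : StronglyMonotone μ F) (hK : LipschitzWith K F) : ∃ x, F x = 0 := by
  obtain ⟨α, hstep, hα⟩ :=
    ((hF.eventually_norm_sub_smul_le hμ hK).and self_mem_nhdsWithin).exists
  have hcontr : ContractingWith (1 - α * (μ / 2)).toNNReal fun x => x - α • F x := by
    refine ⟨Real.toNNReal_lt_one.2 (sub_lt_self _ (by positivity)), .of_dist_le_mul fun x y => ?_⟩
    rw [dist_eq_norm, dist_eq_norm, sub_sub_sub_comm, ← smul_sub]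
    exact (hstep x y).trans (mul_le_mul_of_nonneg_right (Real.le_coe_toNNReal _) (norm_nonneg _))
  have hfix : α • F (hcontr.fixedPoint _) = 0 := sub_eq_self.1 hcontr.fixedPoint_isFixedPt
  exact ⟨_, (smul_eq_zero.1 hfix).resolve_left (ne_of_gt hα)⟩

theorem StronglyMonotone.exists_conj {W : Type*} [NormedAddCommGroup W] [InnerProductSpace ℝ W]
    {μ : ℝ} (hμ : 0 < μ) {F : V → V} (hF : StronglyMonotone μ F) (A : W ≃L[ℝ] V) (B : V →ₗ[ℝ] W)
    (hB : ∀ v w, ⟪B v, w⟫ = ⟪v, A w⟫) :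
    ∃ ν > 0, StronglyMonotone ν fun w => B (F (A w)) := by
  set K := ‖(A.symm : V →L[ℝ] W)‖ + 1
  have hK : 0 < K := by positivity
  have hnorm (w : W) : ‖w‖ ≤ K * ‖A w‖ := by
    have h := (A.symm : V →L[ℝ] W).le_opNorm (A w)
    rw [ContinuousLinearEquiv.coe_coe, A.symm_apply_apply] at h
    exact h.trans (mul_le_mul_of_nonneg_right (le_add_of_nonneg_right zero_le_one) (norm_nonneg _))
  refine ⟨μ / K ^ 2, by positivity, fun x y => ?_⟩
  calc μ / K ^ 2 * ‖x - y‖ ^ 2 ≤ μ / K ^ 2 * (K * ‖A (x - y)‖) ^ 2 := by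
        gcongr
        exact hnorm _
    _ = μ * ‖A (x - y)‖ ^ 2 := by field_simp
    _ ≤ ⟪F (A x) - F (A y), A (x - y)⟫ := by
        rw [map_sub]
        exact hF _ _
    _ = ⟪B (F (A x)) - B (F (A y)), x - y⟫ := by rw [← map_sub, hB]

end StronglyMonotone

/-- The data of a gradient-tracking scheme `x⁺ = mix (x - α • inject y)`,
`y⁺ = track y + grad x⁺ - grad x`. The agreement states of `x` are the range of `replicate`, with
`average` reading off the common value; `total` is the quantity preserved by `track`, and
`distribute` spreads a given total over a fixed point of `track`. -/
structure GradientTracking (X Y S T : Type*) [NormedAddCommGroup X] [NormedSpace ℝ X]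
    [NormedAddCommGroup Y] [NormedSpace ℝ Y] [NormedAddCommGroup S] [NormedSpace ℝ S]
    [NormedAddCommGroup T] [NormedSpace ℝ T] where
  mix : X →L[ℝ] X
  average : X →L[ℝ] S
  replicate : S →L[ℝ] X
  track : Y →L[ℝ] Y
  total : Y →L[ℝ] T
  distribute : T →L[ℝ] Y
  inject : Y →L[ℝ] X
  grad : X → Y
  average_mix : ∀ x, average (mix x) = average x
  mix_replicate : ∀ s, mix (replicate s) = replicate s
  average_replicate : ∀ s, average (replicate s) = s
  total_track : ∀ y, total (track y) = total y
  track_distribute : ∀ t, track (distribute t) = distribute t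
  total_distribute : ∀ t, total (distribute t) = t

namespace GradientTracking

variable {X Y S T : Type*} [NormedAddCommGroup X] [NormedSpace ℝ X]
  [NormedAddCommGroup Y] [NormedSpace ℝ Y] [NormedAddCommGroup S] [NormedSpace ℝ S]
  [NormedAddCommGroup T] [NormedSpace ℝ T] (P : GradientTracking X Y S T)

/-- The sequences produced by the scheme with step-size `α`, for the customary initialization of the
tracking variable. -/
structure IsTrajectory (α : ℝ) (x : ℕ → X) (y : ℕ → Y) : Prop where
  init : y 0 = P.grad (x 0)
  step_x : ∀ k, x (k + 1) = P.mix (x k - α • P.inject (y k))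
  step_y : ∀ k, y (k + 1) = P.track (y k) + P.grad (x (k + 1)) - P.grad (x k)

/-- The deviation of `x` from agreement. -/
def consensusError : X →L[ℝ] X := .id ℝ X - P.replicate.comp P.average

/-- The deviation of `y` from the distributed form of its total. -/
def trackingError : Y →L[ℝ] Y := .id ℝ Y - P.distribute.comp P.total

/-- The direction in which the average moves when there are no consensus and tracking errors. -/
def meanField (s : S) : S :=
  P.average (P.inject (P.distribute (P.total (P.grad (P.replicate s)))))

variable {P}

theorem average_consensusError (x : X) : P.average (P.consensusError x) = 0 := by
  simp [consensusError, P.average_replicate]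

theorem consensusError_mix (x : X) :
    P.consensusError (P.mix x) = P.mix (P.consensusError x) := by
  simp [consensusError, P.average_mix, P.mix_replicate]

theorem total_trackingError (y : Y) : P.total (P.trackingError y) = 0 := by
  simp [trackingError, P.total_distribute]

theorem trackingError_track (y : Y) :
    P.trackingError (P.track y) = P.track (P.trackingError y) := by
  simp [trackingError, P.total_track, P.track_distribute]

theorem mix_sub_self (x : X) :
    P.mix x - x = P.mix (P.consensusError x) - P.consensusError x := by
  simp [consensusError, P.mix_replicate]

theorem consensusError_add_replicate_average (x : X) :
    P.consensusError x + P.replicate (P.average x) = x := by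
  simp [consensusError]

theorem trackingError_add_distribute_total (y : Y) :
    P.trackingError y + P.distribute (P.total y) = y := by
  simp [trackingError]

theorem IsTrajectory.total_eq {α : ℝ} {x : ℕ → X} {y : ℕ → Y} (h : P.IsTrajectory α x y)
    (k : ℕ) : P.total (y k) = P.total (P.grad (x k)) := by
  induction k with
  | zero => rw [h.init]
  | succ k ih => rw [h.step_y, map_sub, map_add, P.total_track, ih, add_sub_cancel_left]

section Rates

variable {σ κ α : ℝ} {L : NNReal} {s₀ : S}

theorem norm_sub_replicate_le (x : X) (s₀ : S) :
    ‖x - P.replicate s₀‖ ≤ ‖P.consensusError x‖ + ‖P.replicate‖ * ‖P.average x - s₀‖ := by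
  calc ‖x - P.replicate s₀‖ = ‖P.consensusError x + P.replicate (P.average x - s₀)‖ := by
        rw [map_sub, ← add_sub_assoc, consensusError_add_replicate_average]
    _ ≤ _ := (norm_add_le _ _).trans (add_le_add_right (P.replicate.le_opNorm _) _)

theorem norm_tracking_le (hgrad : LipschitzWith L P.grad)
    (hs₀ : P.total (P.grad (P.replicate s₀)) = 0) {x : X} {y : Y}
    (htotal : P.total y = P.total (P.grad x)) :
    ‖y‖ ≤ ‖P.trackingError y‖ + ‖P.distribute.comp P.total‖ *
      (L * (‖P.consensusError x‖ + ‖P.replicate‖ * ‖P.average x - s₀‖)) := by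
  calc ‖y‖ = ‖P.trackingError y +
        P.distribute.comp P.total (P.grad x - P.grad (P.replicate s₀))‖ := by
        simp only [map_sub, ContinuousLinearMap.comp_apply, ← htotal, hs₀, map_zero, sub_zero,
          trackingError_add_distribute_total]
    _ ≤ ‖P.trackingError y‖ + ‖P.distribute.comp P.total‖ * (L * ‖x - P.replicate s₀‖) :=
        (norm_add_le _ _).trans <| add_le_add_right
          (ContinuousLinearMap.le_opNorm_of_le _ (hgrad.norm_sub_le _ _)) _
    _ ≤ _ := by
        gcongr
        exact norm_sub_replicate_le x s₀

theorem exists_norm_inject_le (hgrad : LipschitzWith L P.grad)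
    (hs₀ : P.total (P.grad (P.replicate s₀)) = 0) :
    ∃ K, 0 ≤ K ∧ ∀ x y, P.total y = P.total (P.grad x) →
      ‖P.inject y‖ ≤ K * (‖P.consensusError x‖ + ‖P.trackingError y‖ + ‖P.average x - s₀‖) := by
  set D := ‖P.distribute.comp P.total‖ * L
  have hD : 0 ≤ D := mul_nonneg (ContinuousLinearMap.opNorm_nonneg _) L.2
  set r := ‖P.replicate‖
  have hr : 0 ≤ r := norm_nonneg _
  refine ⟨‖P.inject‖ * (1 + D * (1 + r)), by positivity, fun x y htotal => ?_⟩
  have ha : 0 ≤ ‖P.consensusError x‖ := norm_nonneg _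
  have hb : 0 ≤ ‖P.trackingError y‖ := norm_nonneg _
  have hc : 0 ≤ ‖P.average x - s₀‖ := norm_nonneg _
  rw [mul_assoc]
  refine P.inject.le_opNorm_of_le ((norm_tracking_le hgrad hs₀ htotal).trans ?_)
  rw [← mul_assoc]
  nlinarith [mul_nonneg hD hb, mul_nonneg hD hc, mul_nonneg (mul_nonneg hD hr) ha,
    mul_nonneg (mul_nonneg hD hr) hb]

theorem exists_consensusError_step_le (hσ : 0 ≤ σ)
    (hmix : ∀ x, P.average x = 0 → ‖P.mix x‖ ≤ σ * ‖x‖) (hgrad : LipschitzWith L P.grad)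
    (hs₀ : P.total (P.grad (P.replicate s₀)) = 0) :
    ∃ K, 0 ≤ K ∧ ∀ α, 0 ≤ α → ∀ x y, P.total y = P.total (P.grad x) →
      ‖P.consensusError (P.mix (x - α • P.inject y))‖ ≤ σ * ‖P.consensusError x‖ +
        α * (K * (‖P.consensusError x‖ + ‖P.trackingError y‖ + ‖P.average x - s₀‖)) := by
  obtain ⟨K, hK, hinject⟩ := exists_norm_inject_le hgrad hs₀
  refine ⟨σ * (‖P.consensusError‖ * K), by positivity, fun α hα x y htotal => ?_⟩
  have hE := P.consensusError.le_opNorm_of_le (hinject x y htotal)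
  set e := ‖P.consensusError x‖ + ‖P.trackingError y‖ + ‖P.average x - s₀‖
  calc ‖P.consensusError (P.mix (x - α • P.inject y))‖
      ≤ σ * ‖P.consensusError x - α • P.consensusError (P.inject y)‖ := by
        rw [consensusError_mix, ← map_smul P.consensusError, ← map_sub P.consensusError]
        exact hmix _ (average_consensusError _)
    _ ≤ σ * (‖P.consensusError x‖ + α * (‖P.consensusError‖ * (K * e))) := by
        refine mul_le_mul_of_nonneg_left ((norm_sub_le _ _).trans ?_) hσ
        rw [norm_smul, Real.norm_of_nonneg hα]
        gcongr
    _ = _ := by ring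

theorem norm_mix_sub_le (hα : 0 ≤ α) (x w : X) :
    ‖P.mix (x - α • w) - x‖ ≤ (‖P.mix‖ + 1) * ‖P.consensusError x‖ + α * (‖P.mix‖ * ‖w‖) := by
  calc ‖P.mix (x - α • w) - x‖
      = ‖P.mix (P.consensusError x) - P.consensusError x - α • P.mix w‖ := by
        rw [← mix_sub_self, map_sub, map_smul, sub_right_comm]
    _ ≤ ‖P.mix (P.consensusError x)‖ + ‖P.consensusError x‖ + α * ‖P.mix w‖ := by
        refine (norm_sub_le _ _).trans (add_le_add (norm_sub_le _ _) ?_)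
        rw [norm_smul, Real.norm_of_nonneg hα]
    _ ≤ ‖P.mix‖ * ‖P.consensusError x‖ + ‖P.consensusError x‖ + α * (‖P.mix‖ * ‖w‖) := by
        gcongr <;> exact P.mix.le_opNorm _
    _ = _ := by ring

theorem exists_trackingError_step_le (htrack : ∀ y, P.total y = 0 → ‖P.track y‖ ≤ σ * ‖y‖)
    (hgrad : LipschitzWith L P.grad) (hs₀ : P.total (P.grad (P.replicate s₀)) = 0) :
    ∃ K, 0 ≤ K ∧ ∀ α, 0 ≤ α → ∀ x y, P.total y = P.total (P.grad x) →
      ‖P.trackingError (P.track y + P.grad (P.mix (x - α • P.inject y)) - P.grad x)‖ ≤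
        σ * ‖P.trackingError y‖ + K * ‖P.consensusError x‖ +
        α * (K * (‖P.consensusError x‖ + ‖P.trackingError y‖ + ‖P.average x - s₀‖)) := by
  obtain ⟨K, hK, hinject⟩ := exists_norm_inject_le hgrad hs₀
  set G := ‖P.trackingError‖ * L
  have : 0 ≤ G := mul_nonneg (ContinuousLinearMap.opNorm_nonneg _) L.2
  refine ⟨G * (‖P.mix‖ + 1) + G * (‖P.mix‖ * K), by positivity, fun α hα x y htotal => ?_⟩
  set e := ‖P.consensusError x‖ + ‖P.trackingError y‖ + ‖P.average x - s₀‖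
  calc ‖P.trackingError (P.track y + P.grad (P.mix (x - α • P.inject y)) - P.grad x)‖
      ≤ σ * ‖P.trackingError y‖ + G * ‖P.mix (x - α • P.inject y) - x‖ := by
        rw [add_sub_assoc, map_add, trackingError_track, mul_assoc]
        refine (norm_add_le _ _).trans (add_le_add (htrack _ (total_trackingError y)) ?_)
        exact P.trackingError.le_opNorm_of_le (hgrad.norm_sub_le _ _)
    _ ≤ σ * ‖P.trackingError y‖ +
        G * ((‖P.mix‖ + 1) * ‖P.consensusError x‖ + α * (‖P.mix‖ * (K * e))) := by
        gcongr
        refine (norm_mix_sub_le hα x _).trans ?_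
        gcongr
        exact hinject x y htotal
    _ = σ * ‖P.trackingError y‖ + G * (‖P.mix‖ + 1) * ‖P.consensusError x‖ +
        α * (G * (‖P.mix‖ * K) * e) := by ring
    _ ≤ _ := by
        gcongr
        · exact le_add_of_nonneg_right (by positivity)
        · exact le_add_of_nonneg_left (by positivity)

theorem exists_optimalityError_step_le (hgrad : LipschitzWith L P.grad) :
    ∃ K, 0 ≤ K ∧ ∀ α, 0 ≤ α →
      (∀ s, ‖s - α • P.meanField s - s₀‖ ≤ (1 - α * κ) * ‖s - s₀‖) →
      ∀ x y, P.total y = P.total (P.grad x) →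
        ‖P.average (P.mix (x - α • P.inject y)) - s₀‖ ≤ (1 - α * κ) * ‖P.average x - s₀‖ +
          α * (K * (‖P.consensusError x‖ + ‖P.trackingError y‖)) := by
  set D := ‖P.distribute.comp P.total‖ * L
  have hD : 0 ≤ D := mul_nonneg (ContinuousLinearMap.opNorm_nonneg _) L.2
  refine ⟨‖P.average.comp P.inject‖ * (1 + D),
    mul_nonneg (ContinuousLinearMap.opNorm_nonneg _) (by positivity),
    fun α hα hmean x y htotal => ?_⟩
  set s := P.average x
  set d := P.trackingError y + P.distribute.comp P.total (P.grad x - P.grad (P.replicate s))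
  have hy : P.average (P.inject y) = P.meanField s + P.average.comp P.inject d := by
    conv_lhs => rw [← trackingError_add_distribute_total (P := P) y, htotal]
    simp only [meanField, d, map_add, map_sub, ContinuousLinearMap.comp_apply]
    abel
  have hd : ‖d‖ ≤ (1 + D) * (‖P.consensusError x‖ + ‖P.trackingError y‖) := by
    have ha : 0 ≤ ‖P.consensusError x‖ := norm_nonneg _
    have hdist := ContinuousLinearMap.le_opNorm_of_le (P.distribute.comp P.total)
      (hgrad.norm_sub_le x (P.replicate s))
    have hx : x - P.replicate s = P.consensusError x := rfl
    rw [hx, ← mul_assoc] at hdist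
    refine (norm_add_le _ _).trans ((add_le_add_right hdist _).trans ?_)
    nlinarith [mul_nonneg hD (norm_nonneg (P.trackingError y))]
  calc ‖P.average (P.mix (x - α • P.inject y)) - s₀‖
      = ‖(s - α • P.meanField s - s₀) - α • P.average.comp P.inject d‖ := by
        rw [P.average_mix, map_sub, map_smul, hy, smul_add]
        congr 1
        abel
    _ ≤ (1 - α * κ) * ‖s - s₀‖ + α * ‖P.average.comp P.inject d‖ := by
        refine (norm_sub_le _ _).trans (add_le_add (hmean s) ?_)
        rw [norm_smul, Real.norm_of_nonneg hα]
    _ ≤ _ := by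
        rw [mul_assoc ‖P.average.comp P.inject‖]
        gcongr
        exact ContinuousLinearMap.le_opNorm_of_le _ hd

/-- The small-gain recursion for the consensus error `a`, the tracking error `b` and the optimality
error `c`; the step-size multiplies every gain except the one from `a` to `b`. -/
structure ErrorRecursion (σ κ K α a b c a' b' c' : ℝ) : Prop where
  consensus : a' ≤ σ * a + α * (K * (a + b + c))
  tracking : b' ≤ σ * b + K * a + α * (K * (a + b + c))
  optimality : c' ≤ (1 - α * κ) * c + α * (K * (a + b))

theorem ErrorRecursion.lyapunov_le {K a b c a' b' c' p r ρ : ℝ}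
    (h : ErrorRecursion σ κ K α a b c a' b' c') (ha : 0 ≤ a) (hb : 0 ≤ b) (hc : 0 ≤ c)
    (hp : 0 ≤ p) (hr : 0 ≤ r) (hρa : p * σ + K + α * (K * (p + 1 + r)) ≤ ρ * p)
    (hρb : σ + α * (K * (p + 1 + r)) ≤ ρ)
    (hρc : α * (K * (p + 1)) + r * (1 - α * κ) ≤ ρ * r) :
    p * a' + b' + r * c' ≤ ρ * (p * a + b + r * c) := by
  calc p * a' + b' + r * c'
      ≤ p * (σ * a + α * (K * (a + b + c))) + (σ * b + K * a + α * (K * (a + b + c))) +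
        r * ((1 - α * κ) * c + α * (K * (a + b))) := by
        gcongr
        exacts [h.consensus, h.tracking, h.optimality]
    _ = (p * σ + K + α * (K * (p + 1 + r))) * a + (σ + α * (K * (p + 1 + r))) * b +
        (α * (K * (p + 1)) + r * (1 - α * κ)) * c := by ring
    _ ≤ ρ * p * a + ρ * b + ρ * r * c := by gcongr
    _ = ρ * (p * a + b + r * c) := by ring

theorem exists_errorRecursion (hσ : 0 ≤ σ) (hmix : ∀ x, P.average x = 0 → ‖P.mix x‖ ≤ σ * ‖x‖)
    (htrack : ∀ y, P.total y = 0 → ‖P.track y‖ ≤ σ * ‖y‖) (hgrad : LipschitzWith L P.grad)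
    (hs₀ : P.total (P.grad (P.replicate s₀)) = 0) :
    ∃ K, 0 ≤ K ∧ ∀ α, 0 ≤ α →
      (∀ s, ‖s - α • P.meanField s - s₀‖ ≤ (1 - α * κ) * ‖s - s₀‖) →
      ∀ x y, P.IsTrajectory α x y → ∀ k, ErrorRecursion σ κ K α
        ‖P.consensusError (x k)‖ ‖P.trackingError (y k)‖ ‖P.average (x k) - s₀‖
        ‖P.consensusError (x (k + 1))‖ ‖P.trackingError (y (k + 1))‖
        ‖P.average (x (k + 1)) - s₀‖ := by
  obtain ⟨K₁, hK₁, hconsensus⟩ := exists_consensusError_step_le hσ hmix hgrad hs₀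
  obtain ⟨K₂, hK₂, htracking⟩ := exists_trackingError_step_le htrack hgrad hs₀
  obtain ⟨K₃, hK₃, hoptimality⟩ := exists_optimalityError_step_le (s₀ := s₀) (κ := κ) hgrad
  refine ⟨K₁ + K₂ + K₃, by positivity, fun α hα hmean x y hxy k => ?_⟩
  have htotal := hxy.total_eq k
  constructor
  · rw [hxy.step_x]
    refine (hconsensus α hα _ _ htotal).trans ?_
    gcongr
    linarith
  · rw [hxy.step_y, hxy.step_x]
    refine (htracking α hα _ _ htotal).trans ?_
    gcongr <;> linarith
  · rw [hxy.step_x]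
    refine (hoptimality α hα hmean _ _ htotal).trans ?_
    gcongr
    linarith

-- The gain from `a` to `b` is not small; weighting `a` by `p = 2 (K + 1) / (1 - σ)` absorbs it.
theorem exists_lyapunov_weights {K : ℝ} (hσ : σ < 1) (hκ : 0 < κ) (hK : 0 ≤ K) (hσ₀ : 0 ≤ σ) :
    ∃ p r : ℝ, 0 < p ∧ 0 < r ∧ ∀ᶠ α in 𝓝[>] (0 : ℝ), ∃ ρ ∈ Set.Ioo (0 : ℝ) 1,
      ∀ a b c a' b' c' : ℝ, 0 ≤ a → 0 ≤ b → 0 ≤ c → ErrorRecursion σ κ K α a b c a' b' c' →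
        p * a' + b' + r * c' ≤ ρ * (p * a + b + r * c) := by
  set p := 2 * (K + 1) / (1 - σ)
  set r := 2 * (K * (p + 1) + 1) / κ
  have hσ' : 0 < 1 - σ := sub_pos.2 hσ
  have hp : 0 < p := by positivity
  have hr : 0 < r := by positivity
  have hpσ : p * (1 - σ) = 2 * (K + 1) := div_mul_cancel₀ _ hσ'.ne'
  have hrκ : r * κ = 2 * (K * (p + 1) + 1) := div_mul_cancel₀ _ hκ.ne'
  refine ⟨p, r, hp, hr, ?_⟩
  filter_upwards [self_mem_nhdsWithin, eventually_mul_lt (K * (p + 1 + r)) one_pos,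
    eventually_mul_lt (K * (p + 1 + r)) (half_pos hσ')] with α hα hα₁ hα₂
  rw [Set.mem_Ioi] at hα
  set ρ := max (max (1 - 1 / p) ((1 + σ) / 2)) (1 - α * (κ / 2))
  have hρa : 1 - 1 / p ≤ ρ := (le_max_left _ _).trans (le_max_left _ _)
  have hρb : (1 + σ) / 2 ≤ ρ := (le_max_right _ _).trans (le_max_left _ _)
  have hρc : 1 - α * (κ / 2) ≤ ρ := le_max_right _ _
  refine ⟨ρ, ⟨by linarith, ?_⟩, fun a b c a' b' c' ha hb hc h => ?_⟩
  · exact max_lt (max_lt (sub_lt_self _ (by positivity)) (by linarith))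
      (sub_lt_self _ (by positivity))
  have hcoeff_a : p * σ + K + α * (K * (p + 1 + r)) ≤ ρ * p := by
    have := mul_le_mul_of_nonneg_right hρa hp.le
    rw [sub_mul, one_mul, one_div_mul_cancel hp.ne'] at this
    linarith
  have hcoeff_b : σ + α * (K * (p + 1 + r)) ≤ ρ := by linarith
  have hcoeff_c : α * (K * (p + 1)) + r * (1 - α * κ) ≤ ρ * r := by
    have := mul_le_mul_of_nonneg_right hρc hr.le
    nlinarith
  exact h.lyapunov_le ha hb hc hp.le hr.le hcoeff_a hcoeff_b hcoeff_c

theorem eventually_exists_linear_rate (hσ : σ ∈ Set.Ico (0 : ℝ) 1)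
    (hmix : ∀ x, P.average x = 0 → ‖P.mix x‖ ≤ σ * ‖x‖)
    (htrack : ∀ y, P.total y = 0 → ‖P.track y‖ ≤ σ * ‖y‖) (hgrad : LipschitzWith L P.grad)
    (hs₀ : P.total (P.grad (P.replicate s₀)) = 0) (hκ : 0 < κ)
    (hmean : ∀ᶠ α in 𝓝[>] (0 : ℝ), ∀ s,
      ‖s - α • P.meanField s - s₀‖ ≤ (1 - α * κ) * ‖s - s₀‖) :
    ∀ᶠ α in 𝓝[>] (0 : ℝ), ∃ ρ ∈ Set.Ioo (0 : ℝ) 1, ∀ x y, P.IsTrajectory α x y →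
      ∃ c > 0, ∀ k, ‖x k - P.replicate s₀‖ ≤ c * ρ ^ k := by
  obtain ⟨K, hK, hrec⟩ := exists_errorRecursion (κ := κ) hσ.1 hmix htrack hgrad hs₀
  obtain ⟨p, r, hp, hr, hlyap⟩ := exists_lyapunov_weights hσ.2 hκ hK hσ.1
  filter_upwards [self_mem_nhdsWithin, hmean, hlyap] with α hα hmeanα ⟨ρ, hρ, hdecay⟩
  refine ⟨ρ, hρ, fun x y hxy => ?_⟩
  set V : ℕ → ℝ := fun k => p * ‖P.consensusError (x k)‖ + ‖P.trackingError (y k)‖ +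
    r * ‖P.average (x k) - s₀‖
  have hV (k : ℕ) : V k ≤ ρ ^ k * V 0 := le_geom hρ.1.le k fun k _ =>
    hdecay _ _ _ _ _ _ (norm_nonneg _) (norm_nonneg _) (norm_nonneg _)
      (hrec α (le_of_lt hα) hmeanα x y hxy k)
  have : 0 ≤ V 0 := by positivity
  set m := 1 / p + ‖P.replicate‖ / r
  have : 0 ≤ m := by positivity
  refine ⟨m * V 0 + 1, by positivity, fun k => ?_⟩
  calc ‖x k - P.replicate s₀‖
      ≤ ‖P.consensusError (x k)‖ + ‖P.replicate‖ * ‖P.average (x k) - s₀‖ :=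
        norm_sub_replicate_le (x k) s₀
    _ = 1 / p * (p * ‖P.consensusError (x k)‖) +
        ‖P.replicate‖ / r * (r * ‖P.average (x k) - s₀‖) := by
        field_simp
    _ ≤ 1 / p * V k + ‖P.replicate‖ / r * V k := by
        have hb := norm_nonneg (P.trackingError (y k))
        have ha : 0 ≤ p * ‖P.consensusError (x k)‖ := by positivity
        have hc : 0 ≤ r * ‖P.average (x k) - s₀‖ := by positivity
        gcongr <;> simp only [V] <;> linarith
    _ = m * V k := (add_mul _ _ _).symm
    _ ≤ m * (ρ ^ k * V 0) := by gcongr; exact hV k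
    _ ≤ (m * V 0 + 1) * ρ ^ k := by
        have := pow_nonneg hρ.1.le k
        linarith

end Rates

section MeanField

variable {X Y S T : Type*} [NormedAddCommGroup X] [NormedSpace ℝ X] [NormedAddCommGroup Y]
  [NormedSpace ℝ Y] [NormedAddCommGroup S] [InnerProductSpace ℝ S] [NormedAddCommGroup T]
  [NormedSpace ℝ T] {P : GradientTracking X Y S T}

theorem exists_lipschitzWith_meanField {L : NNReal} (hgrad : LipschitzWith L P.grad) :
    ∃ K, LipschitzWith K P.meanField :=
  ⟨_, (P.average.comp <| P.inject.comp <| P.distribute.comp P.total).lipschitz.comp <|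
    hgrad.comp P.replicate.lipschitz⟩

theorem eventually_exists_linear_rate_of_stronglyMonotone {σ μ : ℝ} {L : NNReal} {s₀ : S}
    (hσ : σ ∈ Set.Ico (0 : ℝ) 1)
    (hmix : ∀ x, P.average x = 0 → ‖P.mix x‖ ≤ σ * ‖x‖)
    (htrack : ∀ y, P.total y = 0 → ‖P.track y‖ ≤ σ * ‖y‖) (hgrad : LipschitzWith L P.grad)
    (hs₀ : P.total (P.grad (P.replicate s₀)) = 0) (hμ : 0 < μ)
    (hmono : StronglyMonotone μ P.meanField) :
    ∀ᶠ α in 𝓝[>] (0 : ℝ), ∃ ρ ∈ Set.Ioo (0 : ℝ) 1, ∀ x y, P.IsTrajectory α x y →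
      ∃ c > 0, ∀ k, ‖x k - P.replicate s₀‖ ≤ c * ρ ^ k := by
  obtain ⟨K, hK⟩ := exists_lipschitzWith_meanField hgrad
  have hzero : P.meanField s₀ = 0 := by simp only [meanField, hs₀, map_zero]
  refine eventually_exists_linear_rate hσ hmix htrack hgrad hs₀ (half_pos hμ) ?_
  filter_upwards [hmono.eventually_norm_sub_smul_le hμ hK] with α hα s
  simpa only [hzero, sub_zero, sub_right_comm] using hα s s₀

end MeanField

end GradientTracking

section Clusters

theorem exists_lipschitzWith_pi {X ι : Type*} [PseudoEMetricSpace X] [Fintype ι]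
    {Y : ι → Type*} [∀ i, PseudoEMetricSpace (Y i)] {f : X → ∀ i, Y i}
    (hf : ∀ i, ∃ K, LipschitzWith K fun x => f x i) : ∃ K, LipschitzWith K f := by
  choose K hK using hf
  exact ⟨∑ i, K i, fun x y => edist_pi_le_iff.2 fun i =>
    (hK i).weaken (Finset.single_le_sum (fun _ _ => zero_le) (Finset.mem_univ i)) x y⟩

theorem norm_sub_le_mul_norm_sub_spread {N E : Type*} [Fintype N] [NormedAddCommGroup E]
    [InnerProductSpace ℝ E] {s : N → ℝ} (hs : ∀ i, 0 < s i) (x : N → E)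
    (e : E) (i : N) :
    ‖x i - e‖ ≤ (∑ j, (s j)⁻¹) * ‖WithLp.toLp 2 (fun j => s j • x j) - spread s e‖ := by
  have hle : ‖s i • (x i - e)‖ ≤ ‖WithLp.toLp 2 (fun j => s j • x j) - spread s e‖ := by
    simpa only [PiLp.sub_apply, spread_apply, ← smul_sub] using
      PiLp.norm_apply_le (WithLp.toLp 2 (fun j => s j • x j) - spread s e) i
  calc ‖x i - e‖ = (s i)⁻¹ * ‖s i • (x i - e)‖ := by
        rw [norm_smul, Real.norm_of_nonneg (hs i).le, inv_mul_cancel_left₀ (hs i).ne']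
    _ ≤ (∑ j, (s j)⁻¹) * ‖WithLp.toLp 2 (fun j => s j • x j) - spread s e‖ := by
        gcongr
        · exact Finset.sum_nonneg fun j _ => (inv_pos.2 (hs j)).le
        exact Finset.single_le_sum (fun j _ => (inv_pos.2 (hs j)).le) (Finset.mem_univ i)

theorem exists_forall_norm_mixing_le {ι : Type*} [Finite ι] {κ : ι → Type*}
    [∀ h, Fintype (κ h)] {E : Type*} [NormedAddCommGroup E] [InnerProductSpace ℝ E]
    [FiniteDimensional ℝ E] {A : ∀ h, Matrix (κ h) (κ h) ℝ} {s : ∀ h, κ h → ℝ}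
    (hs : ∀ h, IsBalanced (A h) (s h)) :
    ∃ σ ∈ Set.Ico (0 : ℝ) 1, ∀ h, ∀ x : PiLp 2 (fun _ : κ h => E), gather (s h) x = 0 →
      ‖mixing (A h) x‖ ≤ σ * ‖x‖ := by
  choose σ hσ hmixing using fun h => exists_norm_mixing_le_of_isBalanced (E := E) (hs h)
  obtain ⟨τ, hτ, hστ⟩ := ((eventually_mem_set.2 (Ico_mem_nhdsLT one_pos)).and
    (eventually_all.2 fun h => eventually_mem_set.2 (Ico_mem_nhdsLT (hσ h).2))).exists
  exact ⟨τ, hτ, fun h x hx => (hmixing h x hx).trans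
    (mul_le_mul_of_nonneg_right (hστ h).1 (norm_nonneg x))⟩

variable {ι : Type*} [Fintype ι] {κ : ι → Type*} [∀ h, Fintype (κ h)]
  {V : Type*} [NormedAddCommGroup V] [InnerProductSpace ℝ V]
  {R : Matrix ((h : ι) × κ h) ((h : ι) × κ h) ℝ} {s : (h : ι) × κ h → ℝ}
  {C : ∀ h, Matrix (κ h) (κ h) ℝ} {t : ∀ h, κ h → ℝ}

/-- Gradient tracking for clustered agents: decisions are mixed over all agents by `R`, gradients
are tracked inside cluster `h` by `C h`, and agent `i` of cluster `h` has gradient `Γ h i`. Agent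
`i` stores `s i • x i` and `(t i)⁻¹ • y i` instead of its decision `x i` and its tracking variable
`y i`, which is what makes the mixing matrices balanced; the coordinates `A` on the agreement
states are free. -/
@[simps]
def clusterTracking (hs : IsBalanced R s) (ht : ∀ h, IsBalanced (C h) (t h)) (A : V ≃L[ℝ] V)
    (Γ : ∀ h, κ h → V → V) :
    GradientTracking (PiLp 2 fun _ : (h : ι) × κ h => V) (∀ h, PiLp 2 fun _ : κ h => V) V
      (ι → V) where
  mix := mixing R
  average := A.symm.toContinuousLinearMap.comp (gather s)
  replicate := (spread s).comp A.toContinuousLinearMap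
  track := .piMap fun h => mixing (C h)
  total := .piMap fun h => gather (t h)
  distribute := .piMap fun h => spread (t h)
  inject := (PiLp.continuousLinearEquiv 2 ℝ fun _ : (h : ι) × κ h => V).symm
    |>.toContinuousLinearMap.comp <| .pi fun i =>
      (s i * t i.1 i.2) • (PiLp.proj 2 (fun _ : κ i.1 => V) i.2).comp (.proj i.1)
  grad x h := WithLp.toLp 2 fun i => (t h i)⁻¹ • Γ h i ((s ⟨h, i⟩)⁻¹ • x ⟨h, i⟩)
  average_mix x := by simp [gather_mixing, hs.vecMul_eq]
  mix_replicate v := by simp [mixing_spread, hs.mulVec_eq]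
  average_replicate v := by simp [gather_spread, hs.sum_sq]
  total_track y := funext fun h => by simp [gather_mixing, (ht h).vecMul_eq]
  track_distribute τ := funext fun h => by simp [mixing_spread, (ht h).mulVec_eq]
  total_distribute τ := funext fun h => by simp [gather_spread, (ht h).sum_sq]

variable {hs : IsBalanced R s} {ht : ∀ h, IsBalanced (C h) (t h)} {A : V ≃L[ℝ] V}
  {Γ : ∀ h, κ h → V → V}

theorem clusterTracking_inject_apply_apply (y : ∀ h, PiLp 2 fun _ : κ h => V) (i : (h : ι) × κ h) :
    (clusterTracking hs ht A Γ).inject y i = (s i * t i.1 i.2) • y i.1 i.2 := by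
  simp

theorem clusterTracking_total_grad_replicate (v : V) (h : ι) :
    (clusterTracking hs ht A Γ).total
      ((clusterTracking hs ht A Γ).grad ((clusterTracking hs ht A Γ).replicate v)) h =
        ∑ i, Γ h i (A v) := by
  simp [gather_apply, spread_apply, smul_inv_smul₀ ((ht h).pos _).ne',
    inv_smul_smul₀ (hs.pos _).ne']

theorem clusterTracking_meanField (v : V) :
    (clusterTracking hs ht A Γ).meanField v =
      A.symm (∑ h, (∑ i, (s ⟨h, i⟩ * t h i) ^ 2) • ∑ i, Γ h i (A v)) := by
  have htotal := funext (clusterTracking_total_grad_replicate (hs := hs) (ht := ht) (A := A)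
    (Γ := Γ) v)
  rw [GradientTracking.meanField, htotal]
  simp only [clusterTracking_average, ContinuousLinearMap.comp_apply, gather_apply,
    clusterTracking_inject_apply_apply, clusterTracking_distribute, Fintype.sum_sigma]
  refine congrArg A.symm (Finset.sum_congr rfl fun h _ => ?_)
  rw [Finset.sum_smul]
  refine Finset.sum_congr rfl fun i _ => ?_
  rw [ContinuousLinearMap.coe_piMap', Pi.map_apply, spread_apply, smul_smul, smul_smul]
  ring_nf

theorem exists_lipschitzWith_clusterTracking_grad (hΓ : ∀ h i, ∃ L, LipschitzWith L (Γ h i)) :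
    ∃ L, LipschitzWith L (clusterTracking hs ht A Γ).grad := by
  refine exists_lipschitzWith_pi fun h => ?_
  have hcomp (i : κ h) : ∃ L, LipschitzWith L fun x : PiLp 2 (fun _ : (h : ι) × κ h => V) =>
      (t h i)⁻¹ • Γ h i ((s ⟨h, i⟩)⁻¹ • x ⟨h, i⟩) := by
    obtain ⟨L, hL⟩ := hΓ h i
    exact ⟨_, (lipschitzWith_smul _).comp <| hL.comp <| (lipschitzWith_smul _).comp
      (PiLp.proj 2 (𝕜 := ℝ) (fun _ : (h : ι) × κ h => V) ⟨h, i⟩).lipschitz⟩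
  obtain ⟨L, hL⟩ := exists_lipschitzWith_pi hcomp
  exact ⟨_, (PiLp.continuousLinearEquiv 2 ℝ fun _ : κ h => V).symm.lipschitz.comp hL⟩

theorem exists_clusterTracking_contraction [FiniteDimensional ℝ V] :
    ∃ σ ∈ Set.Ico (0 : ℝ) 1,
      (∀ x, (clusterTracking hs ht A Γ).average x = 0 →
        ‖(clusterTracking hs ht A Γ).mix x‖ ≤ σ * ‖x‖) ∧
      ∀ y, (clusterTracking hs ht A Γ).total y = 0 →
        ‖(clusterTracking hs ht A Γ).track y‖ ≤ σ * ‖y‖ := by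
  obtain ⟨σ, hσ, hR⟩ := exists_norm_mixing_le_of_isBalanced (E := V) hs
  obtain ⟨τ, hτ, hC⟩ := exists_forall_norm_mixing_le (E := V) ht
  refine ⟨max σ τ, ⟨hσ.1.trans (le_max_left _ _), max_lt hσ.2 hτ.2⟩, fun x hx => ?_, fun y hy => ?_⟩
  · have hgather : gather s x = 0 := A.symm.map_eq_zero_iff.1 hx
    exact (hR x hgather).trans (by gcongr; exact le_max_left _ _)
  · refine (pi_norm_le_iff_of_nonneg ?_).2 fun h => (hC h (y h) (congrFun hy h)).trans ?_
    · exact mul_nonneg (hτ.1.trans (le_max_right _ _)) (norm_nonneg y)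
    · exact mul_le_mul (le_max_right _ _) (norm_le_pi_norm y h) (norm_nonneg _)
        (hτ.1.trans (le_max_right _ _))

theorem eventually_exists_linear_rate_clusterTracking [FiniteDimensional ℝ V]
    (hΓ : ∀ h i, ∃ L, LipschitzWith L (Γ h i)) {v : V} (hv : ∀ h, ∑ i, Γ h i v = 0) {μ : ℝ}
    (hμ : 0 < μ) (hmono : StronglyMonotone μ fun w =>
      A.symm (∑ h, (∑ i, (s ⟨h, i⟩ * t h i) ^ 2) • ∑ i, Γ h i (A w))) :
    ∀ᶠ α in 𝓝[>] (0 : ℝ), ∃ ρ ∈ Set.Ioo (0 : ℝ) 1, ∀ x y,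
      (clusterTracking hs ht A Γ).IsTrajectory α x y →
        ∃ c > 0, ∀ k, ‖x k - spread s v‖ ≤ c * ρ ^ k := by
  obtain ⟨L, hL⟩ := exists_lipschitzWith_clusterTracking_grad (hs := hs) (ht := ht) (A := A) hΓ
  obtain ⟨σ, hσ, hmix, htrack⟩ :=
    exists_clusterTracking_contraction (hs := hs) (ht := ht) (A := A) (Γ := Γ)
  have hreplicate : (clusterTracking hs ht A Γ).replicate (A.symm v) = spread s v := by simp
  rw [← hreplicate]
  refine GradientTracking.eventually_exists_linear_rate_of_stronglyMonotone hσ hmix htrack hL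
    (funext fun h => ?_) hμ ?_
  · rw [clusterTracking_total_grad_replicate, A.apply_symm_apply, hv, Pi.zero_apply]
  · rwa [show (clusterTracking hs ht A Γ).meanField = _ from funext clusterTracking_meanField]

/-- The sequences of decisions and tracking variables produced by the gradient-tracking iteration
with step-size `α`, for agents grouped in clusters. -/
structure IsClusterTrajectory (R : Matrix ((h : ι) × κ h) ((h : ι) × κ h) ℝ)
    (C : ∀ h, Matrix (κ h) (κ h) ℝ) (Γ : ∀ h, κ h → V → V) (α : ℝ)
    (x : ℕ → (h : ι) × κ h → V) (y : ∀ h, ℕ → κ h → V) : Prop where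
  init : ∀ h i, y h 0 i = Γ h i (x 0 ⟨h, i⟩)
  step_x : ∀ k i, x (k + 1) i = ∑ j, R i j • (x k j - α • y j.1 k j.2)
  step_y : ∀ h k i, y h (k + 1) i =
    ∑ j, C h i j • y h k j + Γ h i (x (k + 1) ⟨h, i⟩) - Γ h i (x k ⟨h, i⟩)

variable [DecidableEq ι] [∀ h, DecidableEq (κ h)]

theorem IsClusterTrajectory.isTrajectory {α : ℝ} {x : ℕ → (h : ι) × κ h → V}
    {y : ∀ h, ℕ → κ h → V} (hxy : IsClusterTrajectory R C Γ α x y)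
    (hs : IsBalanced (diagonal s * R * diagonal s⁻¹) s)
    (ht : ∀ h, IsBalanced (diagonal (t h)⁻¹ * C h * diagonal (t h)) (t h)) (A : V ≃L[ℝ] V) :
    (clusterTracking hs ht A Γ).IsTrajectory α (fun k => WithLp.toLp 2 fun i => s i • x k i)
      (fun k h => WithLp.toLp 2 fun i => (t h i)⁻¹ • y h k i) where
  init := by
    ext h i
    simp [hxy.init, inv_smul_smul₀ (hs.pos _).ne']
  step_x k := by
    ext1 i
    rw [clusterTracking_mix, mixing_apply]
    simp only [PiLp.sub_apply, PiLp.smul_apply, clusterTracking_inject_apply_apply, hxy.step_x,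
      Finset.smul_sum, mul_diagonal, diagonal_mul, Pi.inv_apply]
    refine Finset.sum_congr rfl fun j _ => ?_
    rw [mul_smul (s j), smul_inv_smul₀ ((ht _).pos _).ne', smul_comm α, ← smul_sub, mul_smul,
      inv_smul_smul₀ (hs.pos _).ne', mul_smul]
  step_y k := by
    ext h i
    have hmul (j : κ h) : (t h i)⁻¹ * C h i j * t h j * (t h j)⁻¹ = (t h i)⁻¹ * C h i j :=
      mul_inv_cancel_right₀ ((ht h).pos j).ne' _
    simp [hxy.step_y, mixing_apply, inv_smul_smul₀ (hs.pos _).ne', smul_add, smul_sub,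
      Finset.smul_sum, smul_smul, hmul]

theorem eventually_exists_linear_rate_of_stochastic [Nonempty ι] [∀ h, Nonempty (κ h)]
    [FiniteDimensional ℝ V] (hR : R ∈ rowStochastic ℝ _) (hRirr : R.IsIrreducible)
    (hRdiag : ∀ i, 0 < R i i) (hC : ∀ h, C h ∈ colStochastic ℝ _)
    (hCirr : ∀ h, (C h).IsIrreducible) (hCdiag : ∀ h i, 0 < C h i i)
    (hΓ : ∀ h i, ∃ L, LipschitzWith L (Γ h i)) {v : V} (hv : ∀ h, ∑ i, Γ h i v = 0)
    (hmono : ∀ d : ι → ℝ, (∀ h, 0 < d h) → ∃ A : V ≃L[ℝ] V, ∃ μ > 0,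
      StronglyMonotone μ fun w => A.symm (∑ h, d h • ∑ i, Γ h i (A w))) :
    ∀ᶠ α in 𝓝[>] (0 : ℝ), ∃ ρ ∈ Set.Ioo (0 : ℝ) 1, ∀ x y, IsClusterTrajectory R C Γ α x y →
      ∃ c > 0, ∀ i k, ‖x k i - v‖ ≤ c * ρ ^ k := by
  have : Nonempty ((h : ι) × κ h) := nonempty_sigma.2 ⟨Classical.arbitrary ι, inferInstance⟩
  obtain ⟨s, hs⟩ := exists_isBalanced_of_mem_rowStochastic hR hRirr hRdiag
  choose t ht using fun h =>
    exists_isBalanced_of_mem_colStochastic (hC h) (hCirr h) (hCdiag h)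
  obtain ⟨A, μ, hμ, hA⟩ := hmono (fun h => ∑ i, (s ⟨h, i⟩ * t h i) ^ 2) fun h =>
    Finset.sum_pos (fun i _ => pow_pos (mul_pos (hs.pos _) ((ht h).pos i)) 2)
      Finset.univ_nonempty
  filter_upwards [eventually_exists_linear_rate_clusterTracking (hs := hs) (ht := ht) hΓ hv hμ hA]
    with α ⟨ρ, hρ, hrate⟩
  refine ⟨ρ, hρ, fun x y hxy => ?_⟩
  obtain ⟨c, hc, hdist⟩ := hrate _ _ (hxy.isTrajectory hs ht A)
  have hinv (j : (h : ι) × κ h) : 0 < (s j)⁻¹ := inv_pos.2 (hs.pos j)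
  refine ⟨(∑ j, (s j)⁻¹) * c,
    mul_pos (Finset.sum_pos (fun j _ => hinv j) Finset.univ_nonempty) hc, fun i k => ?_⟩
  rw [mul_assoc]
  exact (norm_sub_le_mul_norm_sub_spread hs.pos (x k) v i).trans
    (mul_le_mul_of_nonneg_left (hdist k) (Finset.sum_nonneg fun j _ => (hinv j).le))

end Clusters

section Nash

theorem le_of_forall_fderiv_sub_nonneg {E : Type*} [NormedAddCommGroup E] [NormedSpace ℝ E]
    {f : E → ℝ} {f' : E → E →L[ℝ] ℝ} {x : E} (hf : ∀ z, HasFDerivAt f (f' z) z)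
    (hnonneg : ∀ z, 0 ≤ f' z (z - x)) (z : E) : f x ≤ f z := by
  have hderiv (t : ℝ) : HasDerivAt (fun t => f (AffineMap.lineMap x z t))
      (f' (AffineMap.lineMap x z t) (z - x)) t :=
    (hf _).comp_hasDerivAt t AffineMap.hasDerivAt_lineMap
  have hmono : MonotoneOn (fun t => f (AffineMap.lineMap x z t)) (Set.Icc (0 : ℝ) 1) := by
    refine monotoneOn_of_hasDerivWithinAt_nonneg (convex_Icc 0 1)
      (fun t _ => (hderiv t).continuousAt.continuousWithinAt)
      (fun t _ => (hderiv t).hasDerivWithinAt) fun t ht => ?_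
    rw [interior_Icc] at ht
    have h := hnonneg (AffineMap.lineMap x z t)
    rw [AffineMap.lineMap_apply, vsub_eq_sub, vadd_eq_add, add_sub_cancel_right, map_smul,
      smul_eq_mul] at h
    rw [AffineMap.lineMap_apply]
    exact (mul_nonneg_iff_of_pos_left ht.1).1 h
  simpa using hmono (Set.left_mem_Icc.2 zero_le_one) (Set.right_mem_Icc.2 zero_le_one) zero_le_one

variable {H : ℕ} {qh : Fin H → ℕ}

theorem blockPatch_apply_same (x : Clustered H qh → ℝ) (h : Fin H) (z : Fin (qh h) → ℝ)
    (j : Fin (qh h)) : blockPatch x h z ⟨h, j⟩ = z j := by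
  simp [blockPatch]

theorem blockPatch_apply_of_ne (x : Clustered H qh → ℝ) {h : Fin H} (z : Fin (qh h) → ℝ)
    {j : Clustered H qh} (hj : j.1 ≠ h) : blockPatch x h z j = x j :=
  dif_neg hj

theorem blockPatch_self (x : Clustered H qh → ℝ) (h : Fin H) :
    blockPatch x h (fun j => x ⟨h, j⟩) = x := by
  ext j
  by_cases hj : j.1 = h
  · subst hj
    exact blockPatch_apply_same x j.1 _ j.2
  · exact blockPatch_apply_of_ne x _ hj

theorem blockPatch_blockPatch (x : Clustered H qh → ℝ) (h : Fin H) (z w : Fin (qh h) → ℝ) :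
    blockPatch (blockPatch x h z) h w = blockPatch x h w := by
  ext j
  by_cases hj : j.1 = h
  · simp only [blockPatch, hj, dite_true]
  · simp only [blockPatch_apply_of_ne _ _ hj]

theorem sum_mul_blockPatch_sub (g x : Clustered H qh → ℝ) (h : Fin H) (z : Fin (qh h) → ℝ) :
    ∑ j, g j * (blockPatch x h z j - x j) = ∑ j, g ⟨h, j⟩ * (z j - x ⟨h, j⟩) := by
  rw [Fintype.sum_sigma, Fintype.sum_eq_single h fun h' hne => ?_]
  · simp only [blockPatch_apply_same]
  · exact Finset.sum_eq_zero fun j _ => by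
      rw [blockPatch_apply_of_ne x z hne, sub_self, mul_zero]

theorem HasBlockGradient.sum {ι : Type*} {s : Finset ι} {f : ι → (Clustered H qh → ℝ) → ℝ}
    {h : Fin H} {g : ι → Fin (qh h) → ℝ} {x : Clustered H qh → ℝ}
    (hf : ∀ i ∈ s, HasBlockGradient (f i) h (g i) x) :
    HasBlockGradient (fun y => ∑ i ∈ s, f i y) h (fun j => ∑ i ∈ s, g i j) x := by
  unfold HasBlockGradient
  simp only [Finset.sum_smul]
  rw [Finset.sum_comm]
  exact HasFDerivAt.fun_sum hf

/-- `x` is a Nash equilibrium of the game with cluster costs `F`: no cluster can lower its cost by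
changing its own block alone. -/
def IsNashEquilibrium (F : Fin H → (Clustered H qh → ℝ) → ℝ) (x : Clustered H qh → ℝ) : Prop :=
  ∀ h z, F h x ≤ F h (blockPatch x h z)

variable {F : Fin H → (Clustered H qh → ℝ) → ℝ} {x : Clustered H qh → ℝ}

theorem IsNashEquilibrium.gradient_eq_zero (hx : IsNashEquilibrium F x) {h : Fin H}
    {g : Fin (qh h) → ℝ} (hg : HasBlockGradient (F h) h g x) : g = 0 := by
  have hmin : IsLocalMin (fun z => F h (blockPatch x h z)) fun j => x ⟨h, j⟩ :=
    .of_forall fun z => by simpa only [blockPatch_self] using hx h z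
  ext j
  simpa [_root_.sum_apply, Pi.single_apply] using
    DFunLike.congr_fun (hmin.hasFDerivAt_eq_zero hg) (Pi.single j 1)

-- Monotonicity along one block makes each cluster cost nondecreasing on rays leaving `x`.
theorem isNashEquilibrium_of_gradient_eq_zero
    {G : (Clustered H qh → ℝ) → Clustered H qh → ℝ}
    (hG : ∀ h x, HasBlockGradient (F h) h (fun j => G x ⟨h, j⟩) x)
    (hmono : ∀ x y, 0 ≤ ∑ j, (G x j - G y j) * (x j - y j)) (hx : G x = 0) :
    IsNashEquilibrium F x := by
  intro h z
  have hderiv (w : Fin (qh h) → ℝ) : HasFDerivAt (fun w => F h (blockPatch x h w))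
      (∑ j, G (blockPatch x h w) ⟨h, j⟩ •
        (ContinuousLinearMap.proj j : (Fin (qh h) → ℝ) →L[ℝ] ℝ)) w := by
    simpa only [HasBlockGradient, blockPatch_blockPatch, blockPatch_apply_same] using
      hG h (blockPatch x h w)
  have hmin := le_of_forall_fderiv_sub_nonneg (x := fun j => x ⟨h, j⟩) hderiv (fun w => ?_) z
  · simpa only [blockPatch_self] using hmin
  · have := hmono (blockPatch x h w) x
    simp only [hx, Pi.zero_apply, sub_zero, sum_mul_blockPatch_sub] at this
    simpa [_root_.sum_apply] using this

end Nash

section Game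

/-- Multiplication of the coordinates by the nonzero numbers `c j`, as an equivalence. -/
def coordScale {ι : Type*} (c : ι → ℝ) (hc : ∀ j, c j ≠ 0) :
    EuclideanSpace ℝ ι ≃L[ℝ] EuclideanSpace ℝ ι :=
  ((PiLp.continuousLinearEquiv 2 ℝ fun _ : ι => ℝ).trans <| ContinuousLinearEquiv.piCongrRight
    fun j => ContinuousLinearEquiv.unitsEquivAut ℝ (Units.mk0 (c j) (hc j))).trans
    (PiLp.continuousLinearEquiv 2 ℝ fun _ : ι => ℝ).symm

theorem coordScale_apply {ι : Type*} (c : ι → ℝ) (hc : ∀ j, c j ≠ 0)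
    (v : EuclideanSpace ℝ ι) (j : ι) : coordScale c hc v j = v j * c j := rfl

theorem inner_coordScale_left {ι : Type*} [Fintype ι] (c : ι → ℝ) (hc : ∀ j, c j ≠ 0)
    (v w : EuclideanSpace ℝ ι) : ⟪coordScale c hc v, w⟫ = ⟪v, coordScale c hc w⟫ := by
  simp only [PiLp.inner_apply, coordScale_apply, RCLike.inner_apply, conj_trivial]
  exact Finset.sum_congr rfl fun j _ => by ring

variable {H : ℕ} {nh qh : Fin H → ℕ}

/-- The inclusion of block `h` into the decision space, with zeros in the other blocks. -/
def blockIncl (h : Fin H) : (Fin (qh h) → ℝ) →ₗ[ℝ] EuclideanSpace ℝ (Clustered H qh) where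
  toFun z := WithLp.toLp 2 (blockPatch 0 h z)
  map_add' z w := by
    ext j
    by_cases hj : j.1 = h <;> simp [blockPatch, hj]
  map_smul' a z := by
    ext j
    by_cases hj : j.1 = h <;> simp [blockPatch, hj]

theorem blockIncl_apply (h : Fin H) (z : Fin (qh h) → ℝ) (j : Clustered H qh) :
    blockIncl h z j = blockPatch 0 h z j := rfl

theorem sum_blockIncl_apply (z : ∀ h, Fin (qh h) → ℝ) (j : Clustered H qh) :
    (∑ h, blockIncl h (z h)) j = z j.1 j.2 := by
  rw [WithLp.ofLp_sum, Finset.sum_apply, Fintype.sum_eq_single j.1 fun h hne => ?_]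
  · exact blockPatch_apply_same 0 j.1 (z j.1) j.2
  · exact blockPatch_apply_of_ne 0 (z h) hne.symm

theorem norm_blockIncl (h : Fin H) (z : Fin (qh h) → ℝ) :
    ‖blockIncl h z‖ = √(∑ j, z j ^ 2) := by
  rw [EuclideanSpace.norm_eq, Fintype.sum_sigma, Fintype.sum_eq_single h fun h' hne => ?_]
  · simp only [Real.norm_eq_abs, sq_abs, blockIncl_apply, blockPatch_apply_same]
  · exact Finset.sum_eq_zero fun j _ => by
      simp [blockIncl_apply, blockPatch_apply_of_ne 0 z (j := ⟨h', j⟩) hne]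

theorem toLp_blockDiag (y : ∀ h, Matrix (Fin (nh h)) (Fin (qh h)) ℝ) (i : Clustered H nh) :
    WithLp.toLp 2 (blockDiag y i) = blockIncl i.1 (y i.1 i.2) := by
  ext ⟨h, j⟩
  by_cases hj : h = i.1
  · subst hj
    simp [_root_.blockDiag, blockIncl_apply, blockPatch]
  · simp [_root_.blockDiag, blockIncl_apply, blockPatch, hj, Ne.symm hj]

variable (gradf : (h : Fin H) → (i : Fin (nh h)) → (Clustered H qh → ℝ) → Fin (qh h) → ℝ)

/-- The partial gradient of agent `i` of cluster `h`, as a vector of the decision space. -/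
def agentField (h : Fin H) (i : Fin (nh h)) (v : EuclideanSpace ℝ (Clustered H qh)) :
    EuclideanSpace ℝ (Clustered H qh) :=
  blockIncl h (gradf h i v)

/-- The game mapping `M(x) = (g¹(x), …, gᴴ(x))`. -/
def gameMap (v : EuclideanSpace ℝ (Clustered H qh)) : EuclideanSpace ℝ (Clustered H qh) :=
  WithLp.toLp 2 fun j => ∑ i, gradf j.1 i v j.2

variable {gradf}

theorem sum_smul_agentField_apply (d : Fin H → ℝ) (v : EuclideanSpace ℝ (Clustered H qh))
    (j : Clustered H qh) :
    (∑ h, d h • ∑ i, agentField gradf h i v) j = d j.1 * gameMap gradf v j := by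
  simp only [agentField, ← map_sum, ← map_smul, sum_blockIncl_apply]
  simp [gameMap, Finset.sum_apply]

theorem sum_agentField_eq_zero {v : EuclideanSpace ℝ (Clustered H qh)} (hv : gameMap gradf v = 0)
    (h : Fin H) : ∑ i, agentField gradf h i v = 0 := by
  have hsum : ∑ i, gradf h i v = 0 := by
    ext j
    simpa [gameMap] using congrArg (fun w => w ⟨h, j⟩) hv
  simp only [agentField]
  rw [← map_sum, hsum, map_zero]

theorem lipschitzWith_agentField {L : ℝ} {h : Fin H} {i : Fin (nh h)}
    (hlip : ∀ x y, √(∑ j, (gradf h i x j - gradf h i y j) ^ 2) ≤ L * √(∑ j, (x j - y j) ^ 2)) :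
    LipschitzWith L.toNNReal (agentField gradf h i) := by
  refine .of_dist_le' fun v w => ?_
  rw [dist_eq_norm, agentField, agentField, ← map_sub, norm_blockIncl, EuclideanSpace.dist_eq]
  simpa [Real.dist_eq, sq_abs] using hlip v w

theorem exists_lipschitzWith_gameMap (hΓ : ∀ h i, ∃ L, LipschitzWith L (agentField gradf h i)) :
    ∃ L, LipschitzWith L (gameMap gradf) := by
  obtain ⟨L, hL⟩ := exists_lipschitzWith_pi fun i : Clustered H nh => hΓ i.1 i.2
  let S : (Clustered H nh → EuclideanSpace ℝ (Clustered H qh)) →L[ℝ] _ :=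
    ∑ i, ContinuousLinearMap.proj i
  have hsum : gameMap gradf = S ∘ fun v i => agentField gradf i.1 i.2 v := by
    ext v j
    simpa [S, Fintype.sum_sigma] using (sum_smul_agentField_apply 1 v j).symm
  rw [hsum]
  exact ⟨_, S.lipschitz.comp hL⟩

theorem stronglyMonotone_gameMap {μ : ℝ} (hmono : ∀ x y : Clustered H qh → ℝ,
      μ * ∑ j, (x j - y j) ^ 2 ≤
        ∑ j : Clustered H qh,
          ((∑ i, gradf j.1 i x j.2) - (∑ i, gradf j.1 i y j.2)) * (x j - y j)) :
    StronglyMonotone μ (gameMap gradf) := fun v w => by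
  simpa [EuclideanSpace.real_norm_sq_eq, PiLp.inner_apply, gameMap, mul_comm] using hmono v w

theorem exists_stronglyMonotone_scaled {μ : ℝ} (hμ : 0 < μ)
    (hM : StronglyMonotone μ (gameMap gradf)) {d : Fin H → ℝ} (hd : ∀ h, 0 < d h) :
    ∃ A : EuclideanSpace ℝ (Clustered H qh) ≃L[ℝ] EuclideanSpace ℝ (Clustered H qh), ∃ ν > 0,
      StronglyMonotone ν fun w => A.symm (∑ h, d h • ∑ i, agentField gradf h i (A w)) := by
  have hsqrt (j : Clustered H qh) : √(d j.1) ≠ 0 := (Real.sqrt_pos.2 (hd j.1)).ne'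
  set A := coordScale (fun j : Clustered H qh => √(d j.1)) hsqrt
  obtain ⟨ν, hν, hA⟩ := hM.exists_conj hμ A A.toLinearMap (inner_coordScale_left _ hsqrt)
  refine ⟨A, ν, hν, ?_⟩
  have hfield (v : EuclideanSpace ℝ (Clustered H qh)) :
      ∑ h, d h • ∑ i, agentField gradf h i v = A (A (gameMap gradf v)) := by
    ext j
    rw [sum_smul_agentField_apply, coordScale_apply, coordScale_apply, mul_assoc,
      Real.mul_self_sqrt (hd j.1).le, mul_comm]
  simp only [hfield, A.symm_apply_apply]
  exact hA

theorem isNashEquilibrium_iff_gameMap_eq_zero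
    {f : (h : Fin H) → Fin (nh h) → (Clustered H qh → ℝ) → ℝ}
    (hgrad : ∀ h i x, HasBlockGradient (f h i) h (gradf h i x) x) {μ : ℝ} (hμ : 0 ≤ μ)
    (hM : StronglyMonotone μ (gameMap gradf)) (x : Clustered H qh → ℝ) :
    IsNashEquilibrium (fun h x => ∑ i, f h i x) x ↔ gameMap gradf (WithLp.toLp 2 x) = 0 := by
  have hgame (h : Fin H) (x : Clustered H qh → ℝ) : HasBlockGradient (fun x => ∑ i, f h i x) h
      (fun j => gameMap gradf (WithLp.toLp 2 x) ⟨h, j⟩) x :=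
    HasBlockGradient.sum (s := .univ) (g := fun i => gradf h i x) fun i _ => hgrad h i x
  have hnonneg (y z : Clustered H qh → ℝ) : 0 ≤ ∑ j, (gameMap gradf (WithLp.toLp 2 y) j -
      gameMap gradf (WithLp.toLp 2 z) j) * (y j - z j) := by
    have h := (mul_nonneg hμ (sq_nonneg _)).trans (hM (WithLp.toLp 2 y) (WithLp.toLp 2 z))
    rw [PiLp.inner_apply] at h
    simpa [mul_comm] using h
  refine ⟨fun hx => ?_, fun hx =>
    isNashEquilibrium_of_gradient_eq_zero hgame hnonneg (congrArg WithLp.ofLp hx)⟩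
  ext ⟨h, j⟩
  exact congrFun (hx.gradient_eq_zero (hgame h x)) j

theorem isClusterTrajectory_of_matrix {R : Matrix (Clustered H nh) (Clustered H nh) ℝ}
    {C : (h : Fin H) → Matrix (Fin (nh h)) (Fin (nh h)) ℝ} {α : ℝ}
    {x : ℕ → Matrix (Clustered H nh) (Clustered H qh) ℝ}
    {y : (h : Fin H) → ℕ → Matrix (Fin (nh h)) (Fin (qh h)) ℝ}
    (hinit : ∀ h, y h 0 = gradMat gradf h (x 0))
    (hx : ∀ k, x (k + 1) = R * (x k - α • blockDiag fun h => y h k))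
    (hy : ∀ h k, y h (k + 1) =
      C h * y h k + gradMat gradf h (x (k + 1)) - gradMat gradf h (x k)) :
    IsClusterTrajectory R C (agentField gradf) α (fun k i => WithLp.toLp 2 (x k i))
      fun h k i => blockIncl h (y h k i) where
  init h i := by rw [hinit]; rfl
  step_x k i := by
    simp only [← toLp_blockDiag (fun h => y h k)]
    ext j
    simp [hx, Matrix.mul_apply]
  step_y h k i := by
    have hrow : y h (k + 1) i = ∑ j, C h i j • y h k j + gradf h i (x (k + 1) ⟨h, i⟩) -
        gradf h i (x k ⟨h, i⟩) := by
      ext j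
      simp [hy, Matrix.mul_apply, gradMat]
    simp only [hrow, agentField, map_sub, map_add, map_sum, map_smul]

end Game

theorem stmt_9_general (H : ℕ) (hH : 0 < H) (nh qh : Fin H → ℕ) (hnh : ∀ h, 0 < nh h)
    (f : (h : Fin H) → Fin (nh h) → (Clustered H qh → ℝ) → ℝ)
    (gradf : (h : Fin H) → (i : Fin (nh h)) → (Clustered H qh → ℝ) → Fin (qh h) → ℝ)
    (hgrad : ∀ h i x, HasBlockGradient (f h i) h (gradf h i x) x)
    (L : ℝ)
    (hlip : ∀ h i x y, Real.sqrt (∑ jj, (gradf h i x jj - gradf h i y jj) ^ 2) ≤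
      L * Real.sqrt (∑ j, (x j - y j) ^ 2))
    (μ : ℝ) (hμ : 0 < μ)
    (hmono : ∀ x y : Clustered H qh → ℝ,
      μ * ∑ j, (x j - y j) ^ 2 ≤
        ∑ j : Clustered H qh,
          ((∑ i, gradf j.1 i x j.2) - (∑ i, gradf j.1 i y j.2)) * (x j - y j))
    (R : Matrix (Clustered H nh) (Clustered H nh) ℝ)
    (hRnonneg : ∀ i j, 0 ≤ R i j) (hRrow : ∀ i, ∑ j, R i j = 1)
    (hRdiag : ∀ i, 0 < R i i)
    (hRirr : ∀ i j, ∃ k : ℕ, 1 ≤ k ∧ 0 < (R ^ k) i j)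
    (C : (h : Fin H) → Matrix (Fin (nh h)) (Fin (nh h)) ℝ)
    (hCnonneg : ∀ h i j, 0 ≤ C h i j) (hCcol : ∀ h j, ∑ i, C h i j = 1)
    (hCdiag : ∀ h i, 0 < C h i i)
    (hCirr : ∀ h i j, ∃ k : ℕ, 1 ≤ k ∧ 0 < ((C h) ^ k) i j) :
    ∃ xstar : Clustered H qh → ℝ,
      (∀ (h : Fin H) (z : Fin (qh h) → ℝ),
        ∑ i, f h i xstar ≤ ∑ i, f h i (blockPatch xstar h z)) ∧
      (∀ y : Clustered H qh → ℝ,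
        (∀ (h : Fin H) (z : Fin (qh h) → ℝ),
          ∑ i, f h i y ≤ ∑ i, f h i (blockPatch y h z)) → y = xstar) ∧
      (∀ j : Clustered H qh, ∑ i, gradf j.1 i xstar j.2 = 0) ∧
      (∀ᶠ α in 𝓝[>] (0 : ℝ), ∃ ρ : ℝ, 0 < ρ ∧ ρ < 1 ∧
        ∀ (xseq : ℕ → Matrix (Clustered H nh) (Clustered H qh) ℝ)
          (yseq : (h : Fin H) → ℕ → Matrix (Fin (nh h)) (Fin (qh h)) ℝ),
          (∀ h, yseq h 0 = gradMat gradf h (xseq 0)) →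
          (∀ k, xseq (k + 1) = R * (xseq k - α • blockDiag (fun h => yseq h k))) →
          (∀ h k, yseq h (k + 1) =
            C h * yseq h k + gradMat gradf h (xseq (k + 1)) - gradMat gradf h (xseq k)) →
          ∃ c : ℝ, 0 < c ∧
            ∀ (i : Clustered H nh) (k : ℕ),
              Real.sqrt (∑ j, (xseq k i j - xstar j) ^ 2) ≤ c * ρ ^ k) := by
  have := Fin.pos_iff_nonempty.1 hH
  have (h : Fin H) : Nonempty (Fin (nh h)) := Fin.pos_iff_nonempty.1 (hnh h)
  have hΓ (h i) : ∃ L, LipschitzWith L (agentField gradf h i) :=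
    ⟨_, lipschitzWith_agentField (hlip h i)⟩
  have hM : StronglyMonotone μ (gameMap gradf) := stronglyMonotone_gameMap hmono
  obtain ⟨K, hK⟩ := exists_lipschitzWith_gameMap hΓ
  obtain ⟨v, hv⟩ := hM.exists_eq_zero hμ hK
  have hNash := isNashEquilibrium_iff_gameMap_eq_zero hgrad hμ.le hM
  refine ⟨v, (hNash v).2 hv, fun y hy => ?_, fun j => congrArg (fun w => w j) hv, ?_⟩
  · exact congrArg WithLp.ofLp (hM.injective hμ (((hNash y).1 hy).trans hv.symm))
  filter_upwards [eventually_exists_linear_rate_of_stochastic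
    (mem_rowStochastic_iff_sum.2 ⟨hRnonneg, hRrow⟩)
    ((isIrreducible_iff_exists_pow_pos hRnonneg).2 hRirr) hRdiag
    (fun h => mem_colStochastic_iff_sum.2 ⟨hCnonneg h, hCcol h⟩)
    (fun h => (isIrreducible_iff_exists_pow_pos (hCnonneg h)).2 (hCirr h)) hCdiag hΓ
    (sum_agentField_eq_zero hv) fun d hd => exists_stronglyMonotone_scaled hμ hM hd]
    with α ⟨ρ, hρ, hrate⟩
  refine ⟨ρ, hρ.1, hρ.2, fun x y hinit hx hy => ?_⟩
  simpa [EuclideanSpace.norm_eq, sq_abs] using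
    hrate _ _ (isClusterTrajectory_of_matrix hinit hx hy)

end

/-- Theorem 1: under the multi-cluster game setup, the game has a
unique Nash equilibrium `x*`; it satisfies `g^h(x*) = 0` for all clusters `h`;
and there are a step-size `α > 0` and a rate `ρ ∈ (0,1)` such that, along any
trajectory of the gradient-tracking algorithm, every agent's estimate `xᵢ(k)`
converges to `x*` at a linear (geometric) rate: `‖xᵢ(k) − x*‖ ≤ c ρᵏ`. -/
theorem stmt_9 (H : ℕ) (hH : 0 < H) (nh qh : Fin H → ℕ) (hnh : ∀ h, 0 < nh h)
    (f : (h : Fin H) → Fin (nh h) → (Clustered H qh → ℝ) → ℝ)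
    (gradf : (h : Fin H) → (i : Fin (nh h)) → (Clustered H qh → ℝ) → Fin (qh h) → ℝ)
    (hconv : ∀ h i, ConvexOn ℝ Set.univ (f h i))
    (hsmooth : ∀ h i, ContDiff ℝ 1 (f h i))
    (hgrad : ∀ h i x, HasBlockGradient (f h i) h (gradf h i x) x)
    (L : ℝ) (hL : 0 < L)
    (hlip : ∀ h i x y, Real.sqrt (∑ jj, (gradf h i x jj - gradf h i y jj) ^ 2) ≤
      L * Real.sqrt (∑ j, (x j - y j) ^ 2))
    (μ : ℝ) (hμ : 0 < μ)
    (hmono : ∀ x y : Clustered H qh → ℝ,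
      μ * ∑ j, (x j - y j) ^ 2 ≤
        ∑ j : Clustered H qh,
          ((∑ i, gradf j.1 i x j.2) - (∑ i, gradf j.1 i y j.2)) * (x j - y j))
    (R : Matrix (Clustered H nh) (Clustered H nh) ℝ)
    (hRnonneg : ∀ i j, 0 ≤ R i j) (hRrow : ∀ i, ∑ j, R i j = 1)
    (hRdiag : ∀ i, 0 < R i i)
    (hRirr : ∀ i j, ∃ k : ℕ, 1 ≤ k ∧ 0 < (R ^ k) i j)
    (C : (h : Fin H) → Matrix (Fin (nh h)) (Fin (nh h)) ℝ)
    (hCnonneg : ∀ h i j, 0 ≤ C h i j) (hCcol : ∀ h j, ∑ i, C h i j = 1)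
    (hCdiag : ∀ h i, 0 < C h i i)
    (hCirr : ∀ h i j, ∃ k : ℕ, 1 ≤ k ∧ 0 < ((C h) ^ k) i j) :
    ∃ xstar : Clustered H qh → ℝ,
      (∀ (h : Fin H) (z : Fin (qh h) → ℝ),
        ∑ i, f h i xstar ≤ ∑ i, f h i (blockPatch xstar h z)) ∧
      (∀ y : Clustered H qh → ℝ,
        (∀ (h : Fin H) (z : Fin (qh h) → ℝ),
          ∑ i, f h i y ≤ ∑ i, f h i (blockPatch y h z)) → y = xstar) ∧
      (∀ j : Clustered H qh, ∑ i, gradf j.1 i xstar j.2 = 0) ∧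
      (∃ α : ℝ, 0 < α ∧ ∃ ρ : ℝ, 0 < ρ ∧ ρ < 1 ∧
        ∀ (xseq : ℕ → Matrix (Clustered H nh) (Clustered H qh) ℝ)
          (yseq : (h : Fin H) → ℕ → Matrix (Fin (nh h)) (Fin (qh h)) ℝ),
          (∀ h, yseq h 0 = gradMat gradf h (xseq 0)) →
          (∀ k, xseq (k + 1) = R * (xseq k - α • blockDiag (fun h => yseq h k))) →
          (∀ h k, yseq h (k + 1) =
            C h * yseq h k + gradMat gradf h (xseq (k + 1)) - gradMat gradf h (xseq k)) →
          ∃ c : ℝ, 0 < c ∧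
            ∀ (i : Clustered H nh) (k : ℕ),
              Real.sqrt (∑ j, (xseq k i j - xstar j) ^ 2) ≤ c * ρ ^ k) := by
  obtain ⟨xstar, hNash, huniq, hzero, hrate⟩ := stmt_9_general H hH nh qh hnh f gradf hgrad L hlip
    μ hμ hmono R hRnonneg hRrow hRdiag hRirr C hCnonneg hCcol hCdiag hCirr
  obtain ⟨α, hα, hpos⟩ := (hrate.and self_mem_nhdsWithin).exists
  exact ⟨xstar, hNash, huniq, hzero, α, hpos, hα⟩
end
end

section
/- Under the multi-cluster game setup, for every α ≥ 0 and every matrix x ∈ ℝ^{n×q} with rows x_i^T (ordered by cluster), setting x̄ = u^T x ∈ ℝ^{1×q}, ḡ^h = (1/n_h) Σ_{i=1}^{n_h} (∇_{x^h} f_i^h(x̄))^T, ȳ^h = (1/n_h) Σ_{i=1}^{n_h} (∇_{x^h} f_i^h(x_i))^T, Λ_ḡ = blockdiag{v^1 ḡ^1, …, v^H ḡ^H} and Λ_y = blockdiag{v^1 ȳ^1, …, v^H ȳ^H}, one has: ‖α 1 u^T (Λ_ḡ − Λ_y)‖_F ≤ α · δ_{F,u} · L_v · ‖1 u^T‖₂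 · ‖x − 1 x̄‖_F^u, where δ_{F,u} = max_i u_i^{-1/2}. -/
noncomputable section

/-!
The Frobenius norm satisfies `‖A B‖_F ≤ ‖A‖₂ ‖B‖_F`, which takes care of the factor `1 uᵀ`. What
remains is that the map sending a profile of points (one row per agent) to the block-diagonal matrix
of weighted cluster averages of the gradients at these points is `L_v`-Lipschitz for `‖·‖_F`: the
block of a cluster of size `n_h` is a rank-one matrix `v^h d^h`, and the bound
`‖v^h‖² ≤ n_h (max v)²` cancels the factor `1 / n_h` in Jensen's bound
`‖d^h‖² ≤ (1 / n_h) ∑ᵢ ‖d_i^h‖²`. Since `Λ_ḡ` and `Λ_y` are the values of this map at `1 x̄` and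
`x`, it remains to compare `‖·‖_F` with `‖·‖_F^u`.
-/

theorem rowRep_apply (m : Type*) {n : Type*} (w : n → ℝ) (i : m) : rowRep m w i = w :=
  rfl

section FrobeniusNorm

variable {m n : Type*} [Fintype m] [Fintype n]

theorem frobNorm_nonneg (A : Matrix m n ℝ) : 0 ≤ frobNorm A :=
  Real.sqrt_nonneg _

theorem frobNorm_sq (A : Matrix m n ℝ) : frobNorm A ^ 2 = ∑ i, ∑ j, A i j ^ 2 :=
  Real.sq_sqrt (by positivity)

theorem frobNorm_smul (c : ℝ) (A : Matrix m n ℝ) : frobNorm (c • A) = |c| * frobNorm A := by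
  simp only [frobNorm, Matrix.smul_apply, smul_eq_mul, mul_pow, ← Finset.mul_sum]
  rw [Real.sqrt_mul (sq_nonneg c), Real.sqrt_sq_eq_abs]

theorem frobNorm_sub_comm (A B : Matrix m n ℝ) : frobNorm (A - B) = frobNorm (B - A) := by
  simp only [frobNorm, Matrix.sub_apply, sub_sq_comm]

theorem frobNorm_vecMulVec_sq (a : m → ℝ) (b : n → ℝ) :
    frobNorm (Matrix.vecMulVec a b) ^ 2 = (∑ i, a i ^ 2) * ∑ j, b j ^ 2 := by
  simp only [frobNorm_sq, Matrix.vecMulVec_apply, mul_pow, Finset.sum_mul_sum]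

theorem frobNorm_blockDiagonal'_sq {ι : Type*} [Fintype ι] [DecidableEq ι] {M N : ι → Type*}
    [∀ h, Fintype (M h)] [∀ h, Fintype (N h)] (A : ∀ h, Matrix (M h) (N h) ℝ) :
    frobNorm (Matrix.blockDiagonal' A) ^ 2 = ∑ h, frobNorm (A h) ^ 2 := by
  simp only [frobNorm_sq, Fintype.sum_sigma]
  refine Finset.sum_congr rfl fun h _ => Finset.sum_congr rfl fun i _ => ?_
  rw [Finset.sum_eq_single h]
  · simp only [Matrix.blockDiagonal'_apply_eq]
  · intro h' _ hne
    simp only [Matrix.blockDiagonal'_apply_ne A _ _ hne.symm, ne_eq, OfNat.ofNat_ne_zero,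
      not_false_eq_true, zero_pow, Finset.sum_const_zero]
  · exact fun hh => absurd (Finset.mem_univ h) hh

variable [DecidableEq m]

theorem specNorm_nonneg (A : Matrix m m ℝ) : 0 ≤ specNorm A :=
  norm_nonneg _

theorem sum_mulVec_sq_le_specNorm_sq_mul (A : Matrix m m ℝ) (b : m → ℝ) :
    ∑ i, A.mulVec b i ^ 2 ≤ specNorm A ^ 2 * ∑ i, b i ^ 2 := by
  have h := pow_le_pow_left₀ (norm_nonneg _)
    ((Matrix.toEuclideanLin A).toContinuousLinearMap.le_opNorm (WithLp.toLp 2 b)) 2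
  rwa [mul_pow, EuclideanSpace.real_norm_sq_eq, EuclideanSpace.real_norm_sq_eq] at h

theorem frobNorm_mul_le_specNorm_mul_frobNorm (A : Matrix m m ℝ) (B : Matrix m n ℝ) :
    frobNorm (A * B) ≤ specNorm A * frobNorm B := by
  rw [← sq_le_sq₀ (frobNorm_nonneg _) (mul_nonneg (specNorm_nonneg _) (frobNorm_nonneg _)),
    mul_pow, frobNorm_sq, frobNorm_sq, Finset.sum_comm, Finset.sum_comm (f := fun i j => B i j ^ 2),
    Finset.mul_sum]
  exact Finset.sum_le_sum fun j _ => sum_mulVec_sq_le_specNorm_sq_mul A fun i => B i j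

theorem frobNormW_nonneg (w : m → ℝ) (A : Matrix m n ℝ) : 0 ≤ frobNormW w A :=
  frobNorm_nonneg _

theorem frobNormW_sq {w : m → ℝ} (hw : ∀ i, 0 ≤ w i) (A : Matrix m n ℝ) :
    frobNormW w A ^ 2 = ∑ i, w i * ∑ j, A i j ^ 2 := by
  simp only [frobNormW, frobNorm_sq, Matrix.diagonal_mul, mul_pow, Real.sq_sqrt (hw _),
    Finset.mul_sum]

theorem frobNorm_le_mul_frobNormW {w : m → ℝ} (hw : ∀ i, 0 < w i) {δ : ℝ} (hδ : 0 ≤ δ)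
    (hwδ : ∀ i, (Real.sqrt (w i))⁻¹ ≤ δ) (A : Matrix m n ℝ) :
    frobNorm A ≤ δ * frobNormW w A := by
  have one_le (i : m) : 1 ≤ δ ^ 2 * w i := by
    have h : 1 ≤ δ * Real.sqrt (w i) :=
      (inv_le_iff_one_le_mul₀ (Real.sqrt_pos.mpr (hw i))).mp (hwδ i)
    simpa only [mul_pow, Real.sq_sqrt (hw i).le] using one_le_pow₀ h (n := 2)
  rw [← sq_le_sq₀ (frobNorm_nonneg _) (mul_nonneg hδ (frobNormW_nonneg _ _)), mul_pow,
    frobNorm_sq, frobNormW_sq fun i => (hw i).le, Finset.mul_sum]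
  refine Finset.sum_le_sum fun i _ => ?_
  rw [← mul_assoc]
  exact le_mul_of_one_le_left (by positivity) (one_le i)

end FrobeniusNorm

section RowMean

variable {m n : Type*} [Fintype m]

/-- The mean of the rows of a matrix; it is `0` for a matrix without rows. -/
def rowMean (D : Matrix m n ℝ) : n → ℝ :=
  fun k => (Fintype.card m : ℝ)⁻¹ * ∑ i, D i k

theorem rowMean_sub (D E : Matrix m n ℝ) : rowMean (D - E) = rowMean D - rowMean E := by
  ext k
  simp only [rowMean, Matrix.sub_apply, Finset.sum_sub_distrib, mul_sub, Pi.sub_apply]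

variable [Fintype n]

theorem card_mul_sum_rowMean_sq_le (D : Matrix m n ℝ) :
    Fintype.card m * ∑ k, rowMean D k ^ 2 ≤ frobNorm D ^ 2 := by
  rw [frobNorm_sq, Finset.sum_comm, Finset.mul_sum]
  refine Finset.sum_le_sum fun k _ => ?_
  have jensen : (∑ i, D i k) ^ 2 ≤ Fintype.card m * ∑ i, D i k ^ 2 := sq_sum_le_card_mul_sum_sq
  rcases isEmpty_or_nonempty m with _ | _
  · simp
  · have card_pos : (0 : ℝ) < Fintype.card m := by exact_mod_cast Fintype.card_pos
    calc Fintype.card m * rowMean D k ^ 2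
        = (Fintype.card m : ℝ)⁻¹ * (∑ i, D i k) ^ 2 := by rw [rowMean]; field_simp
      _ ≤ ∑ i, D i k ^ 2 := (inv_mul_le_iff₀ card_pos).mpr jensen

theorem frobNorm_vecMulVec_rowMean_sq_le {a : m → ℝ} {M : ℝ} (ha : ∀ i, |a i| ≤ M)
    (D : Matrix m n ℝ) :
    frobNorm (Matrix.vecMulVec a (rowMean D)) ^ 2 ≤ M ^ 2 * frobNorm D ^ 2 := by
  have sum_sq_le : ∑ i, a i ^ 2 ≤ Fintype.card m * M ^ 2 := by
    rw [← nsmul_eq_mul]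
    exact Finset.sum_le_card_nsmul _ _ _ fun i _ => sq_le_sq.mpr ((ha i).trans (le_abs_self M))
  calc frobNorm (Matrix.vecMulVec a (rowMean D)) ^ 2
      = (∑ i, a i ^ 2) * ∑ k, rowMean D k ^ 2 := frobNorm_vecMulVec_sq a _
    _ ≤ Fintype.card m * M ^ 2 * ∑ k, rowMean D k ^ 2 := by gcongr
    _ = M ^ 2 * (Fintype.card m * ∑ k, rowMean D k ^ 2) := by ring
    _ ≤ M ^ 2 * frobNorm D ^ 2 := by gcongr; exact card_mul_sum_rowMean_sq_le D

end RowMean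

section ClusterGradient

variable {ι : Type*} [DecidableEq ι] {N Q : ι → Type*} [∀ h, Fintype (N h)]

/-- The matrix `blockdiag{v^h ḡ^h}`, where `ḡ^h` is the mean over the agents `i` of cluster `h` of
the vectors `G h i (x ⟨h, i⟩)`: each agent evaluates its field at its own row of `x`. Both `Λ_y` and
`Λ_ḡ` are of this form, for the profiles `x` and `1 x̄`. -/
def clusterGradient (v : ∀ h, N h → ℝ) (G : ∀ h, N h → ((Σ h, Q h) → ℝ) → Q h → ℝ)
    (x : Matrix (Σ h, N h) (Σ h, Q h) ℝ) : Matrix (Σ h, N h) (Σ h, Q h) ℝ :=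
  Matrix.blockDiagonal' fun h =>
    Matrix.vecMulVec (v h) (rowMean (Matrix.of fun i => G h i (x ⟨h, i⟩)))

theorem clusterGradient_eq_of_ite (v : ∀ h, N h → ℝ)
    (G : ∀ h, N h → ((Σ h, Q h) → ℝ) → Q h → ℝ) (x : Matrix (Σ h, N h) (Σ h, Q h) ℝ) :
    clusterGradient v G x = Matrix.of fun i j =>
      if i.1 = j.1 then
        v i.1 i.2 * ((Fintype.card (N j.1) : ℝ)⁻¹ * ∑ i', G j.1 i' (x ⟨j.1, i'⟩) j.2)
      else 0 := by
  ext ⟨h, i⟩ ⟨h', k⟩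
  by_cases hh : h = h'
  · subst hh
    simp [clusterGradient, Matrix.vecMulVec_apply, rowMean]
  · simp [clusterGradient, Matrix.blockDiagonal'_apply_ne _ _ _ hh, hh]

variable [Fintype ι] [∀ h, Fintype (Q h)]

theorem frobNorm_clusterGradient_sub_sq_le {v : ∀ h, N h → ℝ} {M : ℝ} (hv : ∀ h i, |v h i| ≤ M)
    (G : ∀ h, N h → ((Σ h, Q h) → ℝ) → Q h → ℝ) (x y : Matrix (Σ h, N h) (Σ h, Q h) ℝ) :
    frobNorm (clusterGradient v G x - clusterGradient v G y) ^ 2 ≤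
      M ^ 2 * ∑ h, ∑ i, ∑ k, (G h i (x ⟨h, i⟩) k - G h i (y ⟨h, i⟩) k) ^ 2 := by
  have block_eq (h : ι) (D E : Matrix (N h) (Q h) ℝ) :
      Matrix.vecMulVec (v h) (rowMean D) - Matrix.vecMulVec (v h) (rowMean E) =
        Matrix.vecMulVec (v h) (rowMean (D - E)) := by
    rw [rowMean_sub, Matrix.vecMulVec_sub]
  rw [clusterGradient, clusterGradient, ← Matrix.blockDiagonal'_sub, frobNorm_blockDiagonal'_sq,
    Finset.mul_sum]
  refine Finset.sum_le_sum fun h _ => ?_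
  rw [Pi.sub_apply, block_eq]
  exact (frobNorm_vecMulVec_rowMean_sq_le (hv h) _).trans_eq (by rw [frobNorm_sq]; rfl)

theorem frobNorm_clusterGradient_sub_le {v : ∀ h, N h → ℝ} {M : ℝ} (hM : 0 ≤ M)
    (hv : ∀ h i, |v h i| ≤ M) {G : ∀ h, N h → ((Σ h, Q h) → ℝ) → Q h → ℝ} {L : ℝ} (hL : 0 ≤ L)
    (hG : ∀ h i y z, Real.sqrt (∑ k, (G h i y k - G h i z k) ^ 2) ≤
      L * Real.sqrt (∑ j, (y j - z j) ^ 2))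
    (x y : Matrix (Σ h, N h) (Σ h, Q h) ℝ) :
    frobNorm (clusterGradient v G x - clusterGradient v G y) ≤ L * M * frobNorm (x - y) := by
  have lipschitz_sq (h : ι) (i : N h) (y z : (Σ h, Q h) → ℝ) :
      ∑ k, (G h i y k - G h i z k) ^ 2 ≤ L ^ 2 * ∑ j, (y j - z j) ^ 2 := by
    have sq_le := pow_le_pow_left₀ (Real.sqrt_nonneg _) (hG h i y z) 2
    rwa [mul_pow, Real.sq_sqrt (by positivity), Real.sq_sqrt (by positivity)] at sq_le
  rw [← sq_le_sq₀ (frobNorm_nonneg _) (mul_nonneg (mul_nonneg hL hM) (frobNorm_nonneg _))]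
  calc frobNorm (clusterGradient v G x - clusterGradient v G y) ^ 2
      ≤ M ^ 2 * ∑ h, ∑ i, ∑ k, (G h i (x ⟨h, i⟩) k - G h i (y ⟨h, i⟩) k) ^ 2 :=
        frobNorm_clusterGradient_sub_sq_le hv G x y
    _ ≤ M ^ 2 * ∑ h, ∑ i, L ^ 2 * ∑ j, (x ⟨h, i⟩ j - y ⟨h, i⟩ j) ^ 2 := by
        gcongr
        exact lipschitz_sq _ _ _ _
    _ = (L * M * frobNorm (x - y)) ^ 2 := by
        simp only [mul_pow, frobNorm_sq, Fintype.sum_sigma, Matrix.sub_apply,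
          ← Finset.mul_sum]
        ring

theorem stmt_11_general [∀ h, DecidableEq (N h)] [Nonempty (Σ h, N h)]
    {G : ∀ h, N h → ((Σ h, Q h) → ℝ) → Q h → ℝ} {L : ℝ} (hL : 0 ≤ L)
    (hG : ∀ h i y z, Real.sqrt (∑ k, (G h i y k - G h i z k) ^ 2) ≤
      L * Real.sqrt (∑ j, (y j - z j) ^ 2))
    {u : (Σ h, N h) → ℝ} (hu : ∀ i, 0 < u i) {v : ∀ h, N h → ℝ} (hv : ∀ h i, 0 ≤ v h i) (α : ℝ)
    (A : Matrix (Σ h, N h) (Σ h, N h) ℝ) (x y : Matrix (Σ h, N h) (Σ h, Q h) ℝ) :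
    frobNorm (α • (A * (clusterGradient v G y - clusterGradient v G x))) ≤
      |α| * Finset.univ.sup' Finset.univ_nonempty (fun i => (Real.sqrt (u i))⁻¹) *
        (L * Finset.univ.sup' Finset.univ_nonempty (fun p : Σ h, N h => v p.1 p.2)) *
        specNorm A * frobNormW u (x - y) := by
  set δ := Finset.univ.sup' Finset.univ_nonempty fun i => (Real.sqrt (u i))⁻¹
  set M := Finset.univ.sup' Finset.univ_nonempty fun p : Σ h, N h => v p.1 p.2
  have le_δ (i) : (Real.sqrt (u i))⁻¹ ≤ δ :=
    Finset.le_sup' (fun i => (Real.sqrt (u i))⁻¹) (Finset.mem_univ i)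
  have le_M (h i) : |v h i| ≤ M := by
    rw [abs_of_nonneg (hv h i)]
    exact Finset.le_sup' (fun p : Σ h, N h => v p.1 p.2) (Finset.mem_univ ⟨h, i⟩)
  obtain ⟨p⟩ := ‹Nonempty (Σ h, N h)›
  have hδ : 0 ≤ δ := (inv_nonneg.mpr (Real.sqrt_nonneg _)).trans (le_δ p)
  have hM : 0 ≤ M := (abs_nonneg _).trans (le_M p.1 p.2)
  have hA := specNorm_nonneg A
  calc frobNorm (α • (A * (clusterGradient v G y - clusterGradient v G x)))
      = |α| * frobNorm (A * (clusterGradient v G y - clusterGradient v G x)) := frobNorm_smul _ _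
    _ ≤ |α| * (specNorm A * frobNorm (clusterGradient v G x - clusterGradient v G y)) := by
        rw [frobNorm_sub_comm (clusterGradient v G x)]
        gcongr
        exact frobNorm_mul_le_specNorm_mul_frobNorm _ _
    _ ≤ |α| * (specNorm A * (L * M * (δ * frobNormW u (x - y)))) := by
        gcongr
        refine (frobNorm_clusterGradient_sub_le hM le_M hL hG x y).trans ?_
        gcongr
        exact frobNorm_le_mul_frobNormW hu hδ le_δ _
    _ = |α| * δ * (L * M) * specNorm A * frobNormW u (x - y) := by ring

end ClusterGradient

/-- Lemma 4, part 2.  Under the multi-cluster game setup, with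
`x̄ = uᵀ x`, `Λ_ḡ = blockdiag{v^h ḡ^h}` (gradients at the average `x̄`) and
`Λ_y = blockdiag{v^h ȳ^h}` (averaged gradients at the individual rows `xᵢ`):
`‖α 1 uᵀ (Λ_ḡ − Λ_y)‖_F ≤ α δ_{F,u} L_v ‖1 uᵀ‖₂ ‖x − 1 x̄‖_F^u`,
where `δ_{F,u} = maxᵢ uᵢ^{-1/2}` and `L_v = L·max_{i,h} v^h_i`. -/
theorem stmt_11 (H : ℕ) (hH : 0 < H) (nh qh : Fin H → ℕ) (hnh : ∀ h, 0 < nh h)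
    (f : (h : Fin H) → Fin (nh h) → (Clustered H qh → ℝ) → ℝ)
    (gradf : (h : Fin H) → (i : Fin (nh h)) → (Clustered H qh → ℝ) → Fin (qh h) → ℝ)
    (hconv : ∀ h i, ConvexOn ℝ Set.univ (f h i))
    (hsmooth : ∀ h i, ContDiff ℝ 1 (f h i))
    (hgrad : ∀ h i x, HasBlockGradient (f h i) h (gradf h i x) x)
    (L : ℝ) (hL : 0 < L)
    (hlip : ∀ h i x y, Real.sqrt (∑ jj, (gradf h i x jj - gradf h i y jj) ^ 2) ≤
      L * Real.sqrt (∑ j, (x j - y j) ^ 2))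
    (u : Clustered H nh → ℝ) (hu : ∀ i, 0 < u i) (husum : ∑ i, u i = 1)
    (v : (h : Fin H) → Fin (nh h) → ℝ) (hv : ∀ h i, 0 < v h i)
    (hvsum : ∀ h, ∑ i, v h i = 1)
    (α : ℝ) (hα : 0 ≤ α)
    (x : Matrix (Clustered H nh) (Clustered H qh) ℝ) :
    frobNorm (α • (rowRep (Clustered H nh) u *
        (Matrix.of (fun (i : Clustered H nh) (j : Clustered H qh) =>
            if i.1 = j.1 then
              v i.1 i.2 * ((nh j.1 : ℝ)⁻¹ * ∑ i', gradf j.1 i' (Matrix.vecMul u x) j.2)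
            else 0)
          - Matrix.of (fun (i : Clustered H nh) (j : Clustered H qh) =>
            if i.1 = j.1 then
              v i.1 i.2 * ((nh j.1 : ℝ)⁻¹ * ∑ i', gradf j.1 i' (x ⟨j.1, i'⟩) j.2)
            else 0)))) ≤
      α *
        (Finset.univ.sup'
          (Finset.univ_nonempty_iff.mpr ⟨⟨⟨0, hH⟩, ⟨0, hnh ⟨0, hH⟩⟩⟩⟩)
          (fun i : Clustered H nh => (Real.sqrt (u i))⁻¹)) *
        (L * Finset.univ.sup'
          (Finset.univ_nonempty_iff.mpr ⟨⟨⟨0, hH⟩, ⟨0, hnh ⟨0, hH⟩⟩⟩⟩)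
          (fun p : Clustered H nh => v p.1 p.2)) *
        specNorm (rowRep (Clustered H nh) u) *
        frobNormW u (x - rowRep (Clustered H nh) (Matrix.vecMul u x)) := by
  have : Nonempty (Clustered H nh) := ⟨⟨⟨0, hH⟩, ⟨0, hnh ⟨0, hH⟩⟩⟩⟩
  simpa only [clusterGradient_eq_of_ite, Fintype.card_fin, rowRep_apply, abs_of_nonneg hα] using
    stmt_11_general hL.le hlip hu (fun h i => (hv h i).le) α (rowRep _ u) x
      (rowRep _ (Matrix.vecMul u x))
end
end
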